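/- Define q̄(βJ, βb) = liminf_{N→∞} E[q_N] for the quantum Sherrington–Kirkpatrick model with parameters βJ and βb. Then for all βJ ≥ 1 and b ≥ 0, setting a_b = √(2·ln(cosh(βb))), one has q̄(βJ, βb) ≥ q̄(βJ + a_b, 0) − 3βb. -/

import Mathlib

open Matrix MeasureTheory ProbabilityTheory

noncomputable section

abbrev Conf (N : ℕ) := Fin N → Fin 2

def Sz (N : ℕ) (j : Fin N) : Matrix (Conf N) (Conf N) ℂ :=
  Matrix.diagonal fun σ => if σ j = 0 then 1 else -1

def Sx (N : ℕ) (j : Fin N) : Matrix (Conf N) (Conf N) ℂ :=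
  Matrix.of fun σ τ => if τ = Function.update σ j (1 - σ j) then 1 else 0

def UN (N : ℕ) (g : Fin N → Fin N → ℝ) : Matrix (Conf N) (Conf N) ℂ :=
  (-(1 / Real.sqrt N)) • ∑ j : Fin N, ∑ k : Fin N,
    if j < k then g j k • (Sz N j * Sz N k) else 0

def HN (N : ℕ) (J b : ℝ) (g : Fin N → Fin N → ℝ) : Matrix (Conf N) (Conf N) ℂ :=
  J • UN N g - b • ∑ j : Fin N, Sx N j

/-- Gibbs expectation (real part of the trace ratio). -/
def gibbs {n : Type*} [Fintype n] [DecidableEq n] (β : ℝ) (H A : Matrix n n ℂ) : ℝ :=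
  ((NormedSpace.exp ((-β) • H) * A).trace / (NormedSpace.exp ((-β) • H)).trace).re

def qN (N : ℕ) (β J b : ℝ) (g : Fin N → Fin N → ℝ) : ℝ :=
  (2 / ((N : ℝ) * ((N : ℝ) - 1))) * ∑ j : Fin N, ∑ k : Fin N,
    if j < k then (gibbs β (HN N J b g) (Sz N j * Sz N k)) ^ 2 else 0

/-- `q̄(c, d) = liminf_N E[q_N]` for the model with parameters `c = βJ` and `d = βb`. -/
def qbar {Ω : Type*} [MeasurableSpace Ω] (μ : Measure Ω)
    (g : (N : ℕ) → Ω → Fin N → Fin N → ℝ) (c d : ℝ) : ℝ :=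
  Filter.liminf (fun N : ℕ => ∫ ω, qN N 1 c d (g N ω) ∂μ) Filter.atTop

section Spectral

set_option linter.unusedSectionVars false

variable {n : Type*} [Fintype n] [DecidableEq n]

/-- Spectral data of a Hermitian matrix. -/
structure SpecData (X V : Matrix n n ℂ) (x : n → ℝ) : Prop where
  left : Vᴴ * V = 1
  right : V * Vᴴ = 1
  eq : X = V * Matrix.diagonal (fun i => (x i : ℂ)) * Vᴴ
  exp : ∀ s : ℝ, NormedSpace.exp (s • X) =
    V * Matrix.diagonal (fun i => ((Real.exp (s * x i) : ℝ) : ℂ)) * Vᴴ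

lemma exists_specData (X : Matrix n n ℂ) (hX : X.IsHermitian) :
    ∃ (V : Matrix n n ℂ) (x : n → ℝ), SpecData X V x := by
  have hl : (hX.eigenvectorUnitary : Matrix n n ℂ)ᴴ * (hX.eigenvectorUnitary : Matrix n n ℂ) = 1 :=
    Unitary.coe_star_mul_self hX.eigenvectorUnitary
  have hr : (hX.eigenvectorUnitary : Matrix n n ℂ) * (hX.eigenvectorUnitary : Matrix n n ℂ)ᴴ = 1 :=
    Unitary.coe_mul_star_self hX.eigenvectorUnitary
  have he : X = (hX.eigenvectorUnitary : Matrix n n ℂ) *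
      Matrix.diagonal (fun i => ((hX.eigenvalues i : ℝ) : ℂ)) *
      (hX.eigenvectorUnitary : Matrix n n ℂ)ᴴ := by
    conv_lhs => rw [hX.spectral_theorem]
    rw [Unitary.conjStarAlgAut_apply]
    rfl
  refine ⟨hX.eigenvectorUnitary, hX.eigenvalues, hl, hr, he, ?_⟩
  intro s
  generalize (hX.eigenvectorUnitary : Matrix n n ℂ) = V at hl hr he
  generalize hX.eigenvalues = x at he
  have hinv : V⁻¹ = Vᴴ := Matrix.inv_eq_right_inv hr
  have hu : IsUnit V := ⟨⟨V, Vᴴ, hr, hl⟩, rfl⟩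
  have h1 : s • X = V * Matrix.diagonal (fun i => ((s * x i : ℝ) : ℂ)) * V⁻¹ := by
    rw [hinv, he]
    have : Matrix.diagonal (fun i => ((s * x i : ℝ) : ℂ))
        = s • Matrix.diagonal (fun i => ((x i : ℝ) : ℂ)) := by
      rw [← Matrix.diagonal_smul]
      congr 1
      ext i
      simp
    rw [this, Matrix.mul_smul, Matrix.smul_mul]
  rw [h1, Matrix.exp_conj _ _ hu, hinv, Matrix.exp_diagonal]
  congr 3
  ext i
  rw [Pi.coe_exp, ← Complex.exp_eq_exp_ℂ]
  simp

/-- the real part of the trace -/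
def rtr (A : Matrix n n ℂ) : ℝ := A.trace.re

/-- the real function `f` of a matrix with spectral data `V` -/
def dg (V : Matrix n n ℂ) (f : n → ℝ) : Matrix n n ℂ :=
  V * Matrix.diagonal (fun i => (f i : ℂ)) * Vᴴ

lemma rtr_mul_comm (A B : Matrix n n ℂ) : rtr (A * B) = rtr (B * A) := by
  unfold rtr; rw [Matrix.trace_mul_comm]

lemma rtr_add (A B : Matrix n n ℂ) : rtr (A + B) = rtr A + rtr B := by
  simp [rtr, Matrix.trace_add]

lemma rtr_sub (A B : Matrix n n ℂ) : rtr (A - B) = rtr A - rtr B := by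
  simp [rtr, Matrix.trace_sub]

lemma rtr_neg (A : Matrix n n ℂ) : rtr (-A) = - rtr A := by
  simp [rtr, Matrix.trace_neg]

lemma rtr_smul (r : ℝ) (A : Matrix n n ℂ) : rtr (r • A) = r * rtr A := by
  simp [rtr, Matrix.trace_smul]

lemma rtr_sum {ι : Type*} (s : Finset ι) (f : ι → Matrix n n ℂ) :
    rtr (∑ i ∈ s, f i) = ∑ i ∈ s, rtr (f i) := by
  simp [rtr, Matrix.trace_sum]

lemma dg_one {V : Matrix n n ℂ} (h : V * Vᴴ = 1) : dg V (fun _ => 1) = 1 := by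
  simp [dg, h]

lemma dg_mul {V : Matrix n n ℂ} (h : Vᴴ * V = 1) (f g : n → ℝ) :
    dg V f * dg V g = dg V (fun i => f i * g i) := by
  have : dg V f * dg V g = V * Matrix.diagonal (fun i => (f i : ℂ)) * (Vᴴ * V) *
      Matrix.diagonal (fun i => (g i : ℂ)) * Vᴴ := by
    simp only [dg, Matrix.mul_assoc]
  rw [this, h, Matrix.mul_one, Matrix.mul_assoc V, Matrix.diagonal_mul_diagonal]
  simp [dg]

/-- weights -/
def wt (V A W : Matrix n n ℂ) (i j : n) : ℝ := Complex.normSq ((Vᴴ * A * W) i j)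

lemma wt_nonneg (V A W : Matrix n n ℂ) (i j : n) : 0 ≤ wt V A W i j := Complex.normSq_nonneg _

lemma wt_symm (V A : Matrix n n ℂ) (hA : A.IsHermitian) (i j : n) :
    wt V A V i j = wt V A V j i := by
  have h : (Vᴴ * A * V)ᴴ = Vᴴ * A * V := by
    simp [Matrix.conjTranspose_mul, hA.eq, Matrix.mul_assoc]
  unfold wt
  conv_lhs => rw [← h]
  rw [Matrix.conjTranspose_apply]
  exact Complex.normSq_conj _

lemma rtr_key (V A W : Matrix n n ℂ) (f g : n → ℝ) :
    rtr (dg V f * A * dg W g * Aᴴ) = ∑ i, ∑ j, wt V A W i j * (f i * g j) := by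
  have h1 : (dg V f * A * dg W g * Aᴴ).trace =
      (Matrix.diagonal (fun i => (f i : ℂ)) * (Vᴴ * A * W) *
        Matrix.diagonal (fun i => (g i : ℂ)) * (Vᴴ * A * W)ᴴ).trace := by
    have : dg V f * A * dg W g * Aᴴ = V * (Matrix.diagonal (fun i => (f i : ℂ)) * (Vᴴ * A * W) *
        Matrix.diagonal (fun i => (g i : ℂ)) * Wᴴ * Aᴴ) := by
      simp only [dg, Matrix.mul_assoc]
    rw [this, Matrix.trace_mul_comm]
    simp only [Matrix.conjTranspose_mul, Matrix.conjTranspose_conjTranspose, Matrix.mul_assoc]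
  unfold rtr
  rw [h1, Matrix.trace, Complex.re_sum]
  refine Finset.sum_congr rfl fun i _ => ?_
  rw [Matrix.diag_apply, Matrix.mul_apply, Complex.re_sum]
  refine Finset.sum_congr rfl fun j _ => ?_
  rw [Matrix.mul_diagonal, Matrix.diagonal_mul, Matrix.conjTranspose_apply]
  have : (f i : ℂ) * (Vᴴ * A * W) i j * (g j : ℂ) * star ((Vᴴ * A * W) i j) =
      ((f i * g j : ℝ) : ℂ) * ((Vᴴ * A * W) i j * (starRingEnd ℂ) ((Vᴴ * A * W) i j)) := by
    simp only [Complex.ofReal_mul, starRingEnd_apply]; ring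
  rw [this, Complex.mul_conj, ← Complex.ofReal_mul, Complex.ofReal_re, wt]
  ring

lemma SpecData.eq' {X V : Matrix n n ℂ} {x : n → ℝ} (h : SpecData X V x) : X = dg V x := h.eq

lemma SpecData.exp' {X V : Matrix n n ℂ} {x : n → ℝ} (h : SpecData X V x) (s : ℝ) :
    NormedSpace.exp (s • X) = dg V (fun i => Real.exp (s * x i)) := h.exp s

lemma SpecData.exp1 {X V : Matrix n n ℂ} {x : n → ℝ} (h : SpecData X V x) :
    NormedSpace.exp X = dg V (fun i => Real.exp (x i)) := by
  have := h.exp' 1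
  simpa using this

/-- partition function -/
def ZZ (X : Matrix n n ℂ) : ℝ := rtr (NormedSpace.exp X)

/-- unnormalized expectation -/
def TT (X A : Matrix n n ℂ) : ℝ := rtr (NormedSpace.exp X * A)

lemma trace_dg {V : Matrix n n ℂ} (h : Vᴴ * V = 1) (f : n → ℝ) :
    (dg V f).trace = ((∑ i, f i : ℝ) : ℂ) := by
  rw [dg, Matrix.trace_mul_comm, ← Matrix.mul_assoc, h, Matrix.one_mul, Matrix.trace_diagonal]
  simp

lemma trace_exp (X : Matrix n n ℂ) (hX : X.IsHermitian) :
    (NormedSpace.exp X).trace = ((ZZ X : ℝ) : ℂ) := by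
  obtain ⟨V, x, h⟩ := exists_specData X hX
  rw [ZZ, rtr, h.exp1, trace_dg h.left, Complex.ofReal_re]

lemma ZZ_pos [Nonempty n] (X : Matrix n n ℂ) (hX : X.IsHermitian) : 0 < ZZ X := by
  obtain ⟨V, x, h⟩ := exists_specData X hX
  rw [ZZ, rtr, h.exp1, trace_dg h.left, Complex.ofReal_re]
  exact Finset.sum_pos (fun i _ => Real.exp_pos _) Finset.univ_nonempty

/-- Peierls–Bogoliubov -/
lemma peierls_bogoliubov [Nonempty n] (X Y : Matrix n n ℂ) (hX : X.IsHermitian)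
    (hY : Y.IsHermitian) :
    Real.log (ZZ X) + TT X Y / ZZ X ≤ Real.log (ZZ (X + Y)) := by
  obtain ⟨V, x, h⟩ := exists_specData X hX
  obtain ⟨W, y, k⟩ := exists_specData (X + Y) (hX.add hY)
  have key := rtr_key V 1 W
  simp only [Matrix.conjTranspose_one, Matrix.mul_one] at key
  have e1 : ZZ X = ∑ i, ∑ j, wt V 1 W i j * (Real.exp (x i) * 1) := by
    rw [← key, dg_one k.right, Matrix.mul_one, ← h.exp1]; rfl
  have e2 : ZZ (X + Y) = ∑ i, ∑ j, wt V 1 W i j * (1 * Real.exp (y j)) := by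
    rw [← key (fun _ => 1), dg_one h.right, Matrix.one_mul, ← k.exp1]; rfl
  have e3 : TT X X = ∑ i, ∑ j, wt V 1 W i j * (Real.exp (x i) * x i * 1) := by
    rw [← key (fun i => Real.exp (x i) * x i), dg_one k.right, Matrix.mul_one, ← dg_mul h.left,
      ← h.exp1, ← h.eq']; rfl
  have e4 : TT X X + TT X Y = ∑ i, ∑ j, wt V 1 W i j * (Real.exp (x i) * y j) := by
    rw [← key, ← h.exp1, ← k.eq', Matrix.mul_add, rtr_add]; rfl
  have hZ := ZZ_pos X hX
  set t := TT X Y / ZZ X with ht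
  have hT : TT X Y = t * ZZ X := by rw [ht]; field_simp
  have main : Real.exp t * ZZ X ≤ ZZ (X + Y) := by
    have : Real.exp t * (ZZ X + (TT X X + TT X Y) - TT X X - t * ZZ X) ≤ ZZ (X + Y) := by
      rw [e4, e3, e1, e2]
      simp only [Finset.mul_sum, ← Finset.sum_add_distrib, ← Finset.sum_sub_distrib]
      refine Finset.sum_le_sum fun i _ => Finset.sum_le_sum fun j _ => ?_
      have hw := wt_nonneg V 1 W i j
      have h1 := Real.add_one_le_exp (y j - x i - t)
      have h2 : Real.exp (y j) = Real.exp t * Real.exp (x i) * Real.exp (y j - x i - t) := by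
        rw [← Real.exp_add, ← Real.exp_add]; congr 1; ring
      calc _ = wt V 1 W i j * (Real.exp t * Real.exp (x i) * (y j - x i - t + 1)) := by ring
        _ ≤ wt V 1 W i j * (Real.exp t * Real.exp (x i) * Real.exp (y j - x i - t)) := by
          gcongr
        _ = _ := by rw [h2]; ring
    rw [hT] at this
    convert this using 1
    ring
  have := Real.log_le_log (by positivity) main
  rwa [Real.log_mul (by positivity) hZ.ne', Real.log_exp, add_comm] at this

/-- `Tr e^{(1-s)X} A e^{sX} A` -/
def phi (X A : Matrix n n ℂ) (s : ℝ) : ℝ :=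
  rtr (NormedSpace.exp ((1 - s) • X) * A * NormedSpace.exp (s • X) * A)

section Inv

lemma phi_le (X A : Matrix n n ℂ) (hX : X.IsHermitian) (hA : A.IsHermitian) (hA2 : A * A = 1)
    (s : ℝ) (h0 : 0 ≤ s) (h1 : s ≤ 1) : phi X A s ≤ ZZ X := by
  obtain ⟨V, x, h⟩ := exists_specData X hX
  have key := rtr_key V A V
  rw [hA.eq] at key
  have e1 : ZZ X = ∑ i, ∑ j, wt V A V i j * (Real.exp (x i) * 1) := by
    rw [← key, dg_one h.right, Matrix.mul_one, Matrix.mul_assoc, hA2, Matrix.mul_one, ← h.exp1]; rfl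
  have e2 : ZZ X = ∑ i, ∑ j, wt V A V i j * (1 * Real.exp (x j)) := by
    rw [← key (fun _ => 1), dg_one h.right, Matrix.one_mul, rtr_mul_comm, ← Matrix.mul_assoc, hA2,
      Matrix.one_mul, ← h.exp1]; rfl
  have e3 : phi X A s = ∑ i, ∑ j, wt V A V i j *
      (Real.exp ((1 - s) * x i) * Real.exp (s * x j)) := by
    rw [← key, ← h.exp', ← h.exp']; rfl
  have : ZZ X = (1 - s) * ZZ X + s * ZZ X := by ring
  rw [this]
  nth_rewrite 1 [e1]
  rw [e2, e3]
  simp only [Finset.mul_sum, ← Finset.sum_add_distrib]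
  refine Finset.sum_le_sum fun i _ => Finset.sum_le_sum fun j _ => ?_
  have hw := wt_nonneg V A V i j
  have hc := convexOn_exp.2 (Set.mem_univ (x i)) (Set.mem_univ (x j)) (sub_nonneg.2 h1) h0 (by ring)
  simp only [smul_eq_mul] at hc
  rw [← Real.exp_add]
  nlinarith [mul_le_mul_of_nonneg_left hc hw]

lemma TT_le (X A : Matrix n n ℂ) (hX : X.IsHermitian) (hA : A.IsHermitian) (hA2 : A * A = 1)
    : TT X A ≤ ZZ X := by
  obtain ⟨V, x, h⟩ := exists_specData X hX
  have key := rtr_key V (1 - A) V (fun i => Real.exp (x i)) (fun _ => 1)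
  rw [dg_one h.right, Matrix.mul_one, Matrix.mul_assoc, Matrix.conjTranspose_sub, hA.eq,
    Matrix.conjTranspose_one, ← h.exp1] at key
  have h2 : (1 - A) * (1 - A) = (2 : ℝ) • (1 - A) := by
    rw [two_smul]
    have : (1 - A) * (1 - A) = 1 - A - A + A * A := by noncomm_ring
    rw [this, hA2]; abel
  rw [h2, Matrix.mul_smul, rtr_smul, Matrix.mul_sub, rtr_sub, Matrix.mul_one] at key
  have hn : 0 ≤ ∑ i, ∑ j, wt V (1 - A) V i j * (Real.exp (x i) * 1) :=
    Finset.sum_nonneg fun i _ => Finset.sum_nonneg fun j _ =>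
      mul_nonneg (wt_nonneg _ _ _ _ _) (by positivity)
  unfold TT ZZ
  linarith

lemma abs_TT_le (X A : Matrix n n ℂ) (hX : X.IsHermitian) (hA : A.IsHermitian) (hA2 : A * A = 1)
    : |TT X A| ≤ ZZ X := by
  rw [abs_le]
  have h1 := TT_le X A hX hA hA2
  have h2 := TT_le X (-A) hX hA.neg (by simpa using hA2)
  have h3 : TT X (-A) = - TT X A := by unfold TT; rw [Matrix.mul_neg, rtr_neg]
  constructor <;> linarith

lemma phi_ge (X A : Matrix n n ℂ) (hX : X.IsHermitian) (hA : A.IsHermitian) (hA2 : A * A = 1)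
    (s : ℝ) : ZZ X - s * TT X (X - A * X * A) ≤ phi X A s := by
  obtain ⟨V, x, h⟩ := exists_specData X hX
  have key := rtr_key V A V
  rw [hA.eq] at key
  have e1 : ZZ X = ∑ i, ∑ j, wt V A V i j * (Real.exp (x i) * 1) := by
    rw [← key, dg_one h.right, Matrix.mul_one, Matrix.mul_assoc, hA2, Matrix.mul_one, ← h.exp1]; rfl
  have e3 : phi X A s = ∑ i, ∑ j, wt V A V i j *
      (Real.exp ((1 - s) * x i) * Real.exp (s * x j)) := by
    rw [← key, ← h.exp', ← h.exp']; rfl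
  have e4 : TT X X = ∑ i, ∑ j, wt V A V i j * (Real.exp (x i) * x i * 1) := by
    rw [← key (fun i => Real.exp (x i) * x i), dg_one h.right, Matrix.mul_one, ← dg_mul h.left,
      ← h.exp1, ← h.eq', Matrix.mul_assoc _ A, hA2, Matrix.mul_one]; rfl
  have e5 : TT X (A * X * A) = ∑ i, ∑ j, wt V A V i j * (Real.exp (x i) * x j) := by
    rw [← key, ← h.exp1, ← h.eq']; unfold TT; simp only [Matrix.mul_assoc]
  have e6 : TT X (X - A * X * A) = TT X X - TT X (A * X * A) := by
    unfold TT; rw [Matrix.mul_sub, rtr_sub]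
  rw [e6, e1, e3, e4, e5]
  simp only [Finset.mul_sum, ← Finset.sum_sub_distrib]
  refine Finset.sum_le_sum fun i _ => Finset.sum_le_sum fun j _ => ?_
  have hw := wt_nonneg V A V i j
  have h1 := Real.add_one_le_exp (s * (x j - x i))
  have h2 : Real.exp ((1 - s) * x i) * Real.exp (s * x j)
      = Real.exp (x i) * Real.exp (s * (x j - x i)) := by
    rw [← Real.exp_add, ← Real.exp_add]; congr 1; ring
  rw [h2]
  calc _ = wt V A V i j * (Real.exp (x i) * (s * (x j - x i) + 1)) := by ring
    _ ≤ _ := by gcongr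

lemma trapezoid (x y : ℝ) :
    (Real.exp x - Real.exp y) * (x - y) ≤ (x - y) ^ 2 * (Real.exp x + Real.exp y) / 2 := by
  have main : ∀ t : ℝ, 0 ≤ t → (2 - t) * Real.exp t ≤ 2 + t := by
    intro t ht
    have hanti : AntitoneOn (fun t : ℝ => (2 - t) * Real.exp t - t) (Set.Ici 0) := by
      refine antitoneOn_of_deriv_nonpos (convex_Ici 0) (by fun_prop) (by fun_prop) ?_
      intro s hs
      have hd : HasDerivAt (fun t : ℝ => (2 - t) * Real.exp t - t)
          ((-1) * Real.exp s + (2 - s) * Real.exp s - 1) s :=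
        (((hasDerivAt_id s).const_sub 2).mul (Real.hasDerivAt_exp s)).sub (hasDerivAt_id s)
      rw [hd.deriv]
      have h1 := Real.add_one_le_exp (-s)
      have h2 : Real.exp (-s) * Real.exp s = 1 := by rw [← Real.exp_add]; simp
      nlinarith [Real.exp_pos s]
    have := hanti (Set.mem_Ici.2 le_rfl) (Set.mem_Ici.2 ht) ht
    simp at this
    linarith
  have aux : ∀ x y : ℝ, y ≤ x →
      (Real.exp x - Real.exp y) * (x - y) ≤ (x - y) ^ 2 * (Real.exp x + Real.exp y) / 2 := by
    intro x y hxy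
    have h1 := main (x - y) (by linarith)
    have h2 : Real.exp x = Real.exp (x - y) * Real.exp y := by rw [← Real.exp_add]; simp
    rw [h2]
    have h3 : 0 ≤ (x - y) * Real.exp y := mul_nonneg (by linarith) (Real.exp_pos y).le
    nlinarith [mul_le_mul_of_nonneg_left h1 h3]
  rcases le_total y x with h | h
  · exact aux x y h
  · have := aux y x h
    nlinarith

lemma TT_comm_le (X A : Matrix n n ℂ) (hX : X.IsHermitian) (hA : A.IsHermitian) (hA2 : A * A = 1)
    : TT X (X - A * X * A) ≤
    TT X ((X - A * X * A) * (X - A * X * A)) / 2 := by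
  obtain ⟨V, x, h⟩ := exists_specData X hX
  have key := rtr_key V A V
  rw [hA.eq] at key
  have e4 : TT X X = ∑ i, ∑ j, wt V A V i j * (Real.exp (x i) * x i * 1) := by
    rw [← key (fun i => Real.exp (x i) * x i), dg_one h.right, Matrix.mul_one, ← dg_mul h.left,
      ← h.exp1, ← h.eq', Matrix.mul_assoc _ A, hA2, Matrix.mul_one]; rfl
  have e5 : TT X (A * X * A) = ∑ i, ∑ j, wt V A V i j * (Real.exp (x i) * x j) := by
    rw [← key, ← h.exp1, ← h.eq']; unfold TT; simp only [Matrix.mul_assoc]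
  have e6 : TT X (X - A * X * A) = TT X X - TT X (A * X * A) := by
    unfold TT; rw [Matrix.mul_sub, rtr_sub]
  have e7 : TT X (X * X) = ∑ i, ∑ j, wt V A V i j * (Real.exp (x i) * (x i * x i) * 1) := by
    rw [← key (fun i => Real.exp (x i) * (x i * x i)), dg_one h.right, Matrix.mul_one,
      ← dg_mul h.left, ← dg_mul h.left,
      ← h.exp1, ← h.eq', Matrix.mul_assoc _ A, hA2, Matrix.mul_one]; rfl
  have e8 : TT X (X * (A * X * A)) = ∑ i, ∑ j, wt V A V i j * (Real.exp (x i) * x i * x j) := by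
    rw [← key (fun i => Real.exp (x i) * x i), ← dg_mul h.left, ← h.exp1, ← h.eq']
    unfold TT; simp only [Matrix.mul_assoc]
  have hc : NormedSpace.exp X * X = X * NormedSpace.exp X := by
    rw [h.exp1]
    conv_lhs => rw [h.eq', dg_mul h.left]
    conv_rhs => rw [h.eq', dg_mul h.left]
    simp only [mul_comm]
  have e9 : TT X (A * X * A * X) = ∑ i, ∑ j, wt V A V i j * (Real.exp (x i) * x i * x j) := by
    rw [← e8]
    unfold TT
    rw [← Matrix.mul_assoc, rtr_mul_comm, ← Matrix.mul_assoc, ← hc]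
    simp only [Matrix.mul_assoc]
  have e10 : TT X (A * (X * X) * A) = ∑ i, ∑ j, wt V A V i j * (Real.exp (x i) * (x j * x j)) := by
    rw [← key, ← h.exp1, ← dg_mul h.left, ← h.eq']; unfold TT; simp only [Matrix.mul_assoc]
  have e11 : TT X ((X - A * X * A) * (X - A * X * A)) =
      TT X (X * X) - TT X (X * (A * X * A)) - TT X (A * X * A * X) + TT X (A * (X * X) * A) := by
    have : (X - A * X * A) * (X - A * X * A) =
        X * X - X * (A * X * A) - A * X * A * X + A * (X * X) * A := by
      have h1 : A * X * A * (A * X * A) = A * (X * X) * A := by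
        calc _ = A * X * (A * A) * X * A := by simp only [Matrix.mul_assoc]
          _ = _ := by rw [hA2]; simp only [Matrix.mul_assoc, Matrix.mul_one]
      rw [Matrix.sub_mul, Matrix.mul_sub, Matrix.mul_sub, h1]
      abel
    rw [this]; unfold TT
    rw [Matrix.mul_add, Matrix.mul_sub, Matrix.mul_sub, rtr_add, rtr_sub, rtr_sub]
  have f1 : TT X (X - A * X * A) = ∑ i, ∑ j, wt V A V i j * (Real.exp (x i) * (x i - x j)) := by
    rw [e6, e4, e5]; simp only [← Finset.sum_sub_distrib]
    refine Finset.sum_congr rfl fun i _ => Finset.sum_congr rfl fun j _ => ?_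
    ring
  have f2 : TT X ((X - A * X * A) * (X - A * X * A)) =
      ∑ i, ∑ j, wt V A V i j * (Real.exp (x i) * (x i - x j) ^ 2) := by
    rw [e11, e7, e8, e9, e10]; simp only [← Finset.sum_sub_distrib, ← Finset.sum_add_distrib]
    refine Finset.sum_congr rfl fun i _ => Finset.sum_congr rfl fun j _ => ?_
    ring
  have g1 : TT X (X - A * X * A) = ∑ i, ∑ j, wt V A V i j * (Real.exp (x j) * (x j - x i)) := by
    rw [f1, Finset.sum_comm]
    refine Finset.sum_congr rfl fun i _ => Finset.sum_congr rfl fun j _ => ?_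
    rw [wt_symm V A hA]
  have g2 : TT X ((X - A * X * A) * (X - A * X * A)) =
      ∑ i, ∑ j, wt V A V i j * (Real.exp (x j) * (x j - x i) ^ 2) := by
    rw [f2, Finset.sum_comm]
    refine Finset.sum_congr rfl fun i _ => Finset.sum_congr rfl fun j _ => ?_
    rw [wt_symm V A hA]
  have fin : TT X (X - A * X * A) + TT X (X - A * X * A) ≤
      (1 / 2) * (TT X ((X - A * X * A) * (X - A * X * A)) +
        TT X ((X - A * X * A) * (X - A * X * A))) := by
    nth_rewrite 1 [f1]
    nth_rewrite 1 [f2]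
    rw [g1, g2]
    simp only [Finset.mul_sum, ← Finset.sum_add_distrib]
    refine Finset.sum_le_sum fun i _ => Finset.sum_le_sum fun j _ => ?_
    have hw := wt_nonneg V A V i j
    nlinarith [mul_le_mul_of_nonneg_left (trapezoid (x i) (x j)) hw]
  linarith

end Inv

end Spectral

section Duhamel

variable {n : Type*} [Fintype n] [DecidableEq n]

attribute [local instance] Matrix.linftyOpNormedRing Matrix.linftyOpNormedAlgebra

/-- The real trace against `A` as a continuous linear map. -/
def rtrL (A : Matrix n n ℂ) : Matrix n n ℂ →L[ℝ] ℝ :=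
  LinearMap.toContinuousLinearMap
    { toFun := fun M => rtr (A * M)
      map_add' := fun M N => by rw [Matrix.mul_add, rtr_add]
      map_smul' := fun r M => by rw [Matrix.mul_smul, rtr_smul]; rfl }

lemma rtrL_apply (A M : Matrix n n ℂ) : rtrL A M = rtr (A * M) := rfl

lemma continuous_mexp : Continuous (NormedSpace.exp : Matrix n n ℂ → Matrix n n ℂ) :=
  NormedSpace.exp_continuous

lemma hasDerivAt_duhamel_aux (X Y : Matrix n n ℂ) (s : ℝ) :
    HasDerivAt (fun s : ℝ => NormedSpace.exp ((1 - s) • X) * NormedSpace.exp (s • Y))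
      (NormedSpace.exp ((1 - s) • X) * (Y - X) * NormedSpace.exp (s • Y)) s := by
  have h1 : HasDerivAt (fun s : ℝ => NormedSpace.exp ((1 - s) • X))
      (-(NormedSpace.exp ((1 - s) • X) * X)) s := by
    have := (hasDerivAt_exp_smul_const X (1 - s)).scomp s ((hasDerivAt_id s).const_sub 1)
    exact this.congr_deriv (by simp; rfl)
  have h2 := hasDerivAt_exp_smul_const' Y s
  have := h1.mul h2
  have e : ∀ P Q : Matrix n n ℂ, -(P * X) * Q + P * (Y * Q) = P * (Y - X) * Q := by
    intro P Q
    rw [Matrix.mul_sub, Matrix.sub_mul, Matrix.mul_assoc P Y Q, Matrix.neg_mul]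
    abel
  exact this.congr_deriv (e _ _)

lemma duhamel (A X Y : Matrix n n ℂ) :
    rtr (A * NormedSpace.exp Y) - rtr (A * NormedSpace.exp X) =
      ∫ s in (0 : ℝ)..1, rtr (A * (NormedSpace.exp ((1 - s) • X) * (Y - X) *
        NormedSpace.exp (s • Y))) := by
  have hd : ∀ s ∈ Set.uIcc (0 : ℝ) 1, HasDerivAt
      (fun s : ℝ => rtrL A (NormedSpace.exp ((1 - s) • X) * NormedSpace.exp (s • Y)))
      (rtrL A (NormedSpace.exp ((1 - s) • X) * (Y - X) * NormedSpace.exp (s • Y))) s := by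
    intro s _
    exact (rtrL A).hasFDerivAt.comp_hasDerivAt s (hasDerivAt_duhamel_aux X Y s)
  have hc : Continuous fun s : ℝ =>
      rtrL A (NormedSpace.exp ((1 - s) • X) * (Y - X) * NormedSpace.exp (s • Y)) := by
    have h1 : Continuous fun s : ℝ => NormedSpace.exp ((1 - s) • X) :=
      continuous_mexp.comp (by fun_prop)
    have h2 : Continuous fun s : ℝ => NormedSpace.exp (s • Y) :=
      continuous_mexp.comp (by fun_prop)
    exact (rtrL A).continuous.comp ((h1.mul continuous_const).mul h2)
  have := intervalIntegral.integral_eq_sub_of_hasDerivAt hd (hc.intervalIntegrable 0 1)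
  simp only [rtrL_apply] at this
  rw [this]
  simp

lemma hasDerivAt_rtr (A X B : Matrix n n ℂ) (x : ℝ) :
    HasDerivAt (fun x : ℝ => rtr (A * NormedSpace.exp (X + x • B)))
      (∫ s in (0 : ℝ)..1, rtr (A * (NormedSpace.exp ((1 - s) • (X + x • B)) * B *
        NormedSpace.exp (s • (X + x • B))))) x := by
  set G : ℝ → ℝ → ℝ := fun y s => rtrL A (NormedSpace.exp ((1 - s) • (X + x • B)) * B *
        NormedSpace.exp (s • (X + y • B))) with hG
  have hGc : Continuous (Function.uncurry G) := by
    have h1 : Continuous fun p : ℝ × ℝ => NormedSpace.exp ((1 - p.2) • (X + x • B)) :=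
      continuous_mexp.comp (by fun_prop)
    have h2 : Continuous fun p : ℝ × ℝ => NormedSpace.exp (p.2 • (X + p.1 • B)) :=
      continuous_mexp.comp (by fun_prop)
    exact (rtrL A).continuous.comp ((h1.mul continuous_const).mul h2)
  have hI : Continuous fun y => ∫ s in (0 : ℝ)..1, G y s :=
    intervalIntegral.continuous_parametric_intervalIntegral_of_continuous' hGc 0 1
  rw [hasDerivAt_iff_tendsto_slope]
  have ht : Filter.Tendsto (fun y => ∫ s in (0 : ℝ)..1, G y s) (nhdsWithin x {x}ᶜ)
      (nhds (∫ s in (0 : ℝ)..1, G x s)) := (hI.tendsto x).mono_left nhdsWithin_le_nhds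
  refine ht.congr' ?_
  filter_upwards [self_mem_nhdsWithin] with y hy
  have hne : y - x ≠ 0 := sub_ne_zero.2 hy
  rw [slope_def_field, duhamel A (X + x • B) (X + y • B), eq_div_iff hne, mul_comm,
    ← intervalIntegral.integral_const_mul]
  congr 1
  ext s
  have : X + y • B - (X + x • B) = (y - x) • B := by rw [sub_smul]; abel
  rw [this, hG]
  simp only [rtrL_apply]
  rw [Matrix.mul_smul, Matrix.smul_mul, Matrix.mul_smul, rtr_smul]

lemma hasDerivAt_ZZ (X B : Matrix n n ℂ) (x : ℝ) :
    HasDerivAt (fun x : ℝ => ZZ (X + x • B)) (TT (X + x • B) B) x := by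
  have := hasDerivAt_rtr 1 X B x
  simp only [Matrix.one_mul] at this
  refine this.congr_deriv ?_
  have : ∀ s : ℝ, rtr (NormedSpace.exp ((1 - s) • (X + x • B)) * B *
        NormedSpace.exp (s • (X + x • B))) = TT (X + x • B) B := by
    intro s
    rw [rtr_mul_comm, ← Matrix.mul_assoc, ← Matrix.exp_add_of_commute]
    · rw [← add_smul]; simp [TT]
    · exact ((Commute.refl _).smul_left _).smul_right _
  simp only [this]
  simp

lemma phi_continuous (X A : Matrix n n ℂ) : Continuous (phi X A) := by
  have h1 : Continuous fun s : ℝ => NormedSpace.exp ((1 - s) • X) :=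
    continuous_mexp.comp (by fun_prop)
  have h2 : Continuous fun s : ℝ => NormedSpace.exp (s • X) :=
    continuous_mexp.comp (by fun_prop)
  have := (rtrL (1 : Matrix n n ℂ)).continuous.comp
    (((h1.mul (continuous_const (y := A))).mul h2).mul (continuous_const (y := A)))
  convert this using 1
  ext s
  simp [phi, rtrL_apply]

lemma hasDerivAt_TT (X A : Matrix n n ℂ) (x : ℝ) :
    HasDerivAt (fun x : ℝ => TT (X + x • A) A)
      (∫ s in (0 : ℝ)..1, phi (X + x • A) A s) x := by
  have := hasDerivAt_rtr A X A x
  have e : (fun x : ℝ => TT (X + x • A) A) =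
      fun x : ℝ => rtr (A * NormedSpace.exp (X + x • A)) := by
    ext y; unfold TT; rw [rtr_mul_comm]
  rw [e]
  refine this.congr_deriv ?_
  · congr 1; ext s; unfold phi; rw [rtr_mul_comm A]

lemma continuous_TT (A : Matrix n n ℂ) : Continuous (fun X => TT X A) := by
  have := (rtrL A).continuous.comp (continuous_mexp (n := n))
  convert this using 1
  ext X
  simp only [Function.comp, rtrL_apply, TT]
  rw [rtr_mul_comm]

lemma continuous_ZZ : Continuous (fun X : Matrix n n ℂ => ZZ X) := by
  have := continuous_TT (1 : Matrix n n ℂ)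
  simpa [TT, ZZ] using this

end Duhamel

section Stein

lemma stein_pdf (F F' : ℝ → ℝ) (hF : ∀ x, HasDerivAt F (F' x) x) (C C' : ℝ)
    (hC : ∀ x, |F x| ≤ C) (hC' : ∀ x, |F' x| ≤ C') :
    ∫ x, x * F x ∂(gaussianReal 0 1) = ∫ x, F' x ∂(gaussianReal 0 1) := by
  have hFc : Continuous F := continuous_iff_continuousAt.2 fun x => (hF x).continuousAt
  have hF'm : Measurable F' := by
    have : F' = deriv F := by ext x; rw [(hF x).deriv]
    rw [this]; exact measurable_deriv F
  rw [integral_gaussianReal_eq_integral_smul one_ne_zero,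
    integral_gaussianReal_eq_integral_smul one_ne_zero]
  simp only [smul_eq_mul]
  set p := gaussianPDFReal 0 1 with hp
  have hpi : Integrable p := integrable_gaussianPDFReal 0 1
  have hpd : ∀ x, HasDerivAt p (-x * p x) x := by
    intro x
    have h1 : HasDerivAt (fun x : ℝ => -(x - 0) ^ 2 / (2 * ((1 : NNReal) : ℝ))) (-x) x := by
      have := (((hasDerivAt_id x).sub_const 0).pow 2).neg.div_const (2 * ((1 : NNReal) : ℝ))
      exact this.congr_deriv (by simp; ring)
    have h2 := (h1.exp).const_mul ((Real.sqrt (2 * Real.pi * ((1 : NNReal) : ℝ)))⁻¹)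
    rw [hp, gaussianPDFReal_def]
    refine h2.congr_deriv ?_
    ring
  have hxp : Integrable (fun x => -x * p x) := by
    have h1 : Integrable (fun x : ℝ => x) (gaussianReal 0 1) :=
      (memLp_id_gaussianReal 1).integrable le_rfl
    rw [gaussianReal_of_var_ne_zero _ one_ne_zero] at h1
    rw [integrable_withDensity_iff (measurable_gaussianPDF 0 1)
      (Filter.Eventually.of_forall fun x => gaussianPDF_lt_top)] at h1
    simp only [toReal_gaussianPDF] at h1
    refine h1.neg.congr (Filter.Eventually.of_forall fun x => ?_)
    simp [hp]
  have hibp := integral_mul_deriv_eq_deriv_mul_of_integrable (u := F) (u' := F') (v := p)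
    (v' := fun x => -x * p x) (fun x _ => hF x) (fun x _ => hpd x)
    (hxp.bdd_mul hFc.aestronglyMeasurable (Filter.Eventually.of_forall hC))
    (hpi.bdd_mul hF'm.aestronglyMeasurable (Filter.Eventually.of_forall hC'))
    (hpi.bdd_mul hFc.aestronglyMeasurable (Filter.Eventually.of_forall hC))
  have e1 : ∫ x, p x * (x * F x) = - ∫ x, F x * (-x * p x) := by
    rw [← integral_neg]; congr 1; ext x; ring
  rw [e1, hibp, neg_neg]
  congr 1; ext x; ring

lemma stein_bounds (F F' : ℝ → ℝ) (hF : ∀ x, HasDerivAt F (F' x) x) (θ κ : ℝ)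
    (hC : ∀ x, |F x| ≤ 1)
    (hl : ∀ x, θ * (κ - F x ^ 2) ≤ F' x) (hu : ∀ x, F' x ≤ θ * (1 - F x ^ 2)) (hθ : 0 ≤ θ) :
    θ * (κ - ∫ x, F x ^ 2 ∂(gaussianReal 0 1)) ≤ ∫ x, x * F x ∂(gaussianReal 0 1) ∧
    ∫ x, x * F x ∂(gaussianReal 0 1) ≤ θ * (1 - ∫ x, F x ^ 2 ∂(gaussianReal 0 1)) := by
  have hFc : Continuous F := continuous_iff_continuousAt.2 fun x => (hF x).continuousAt
  have hF'm : Measurable F' := by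
    have : F' = deriv F := by ext x; rw [(hF x).deriv]
    rw [this]; exact measurable_deriv F
  have hsq : ∀ x, F x ^ 2 ≤ 1 := fun x => by
    have := hC x; rw [← sq_abs]; nlinarith [abs_nonneg (F x)]
  have hC' : ∀ x, |F' x| ≤ θ * (1 + |κ|) := by
    intro x
    rw [abs_le]
    have h1 := neg_abs_le κ
    constructor
    · refine le_trans ?_ (hl x)
      rw [← mul_neg]
      exact mul_le_mul_of_nonneg_left (by linarith [hsq x]) hθ
    · refine (hu x).trans ?_
      exact mul_le_mul_of_nonneg_left (by linarith [sq_nonneg (F x), abs_nonneg κ]) hθ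
  rw [stein_pdf F F' hF 1 _ hC hC']
  have hi1 : Integrable (fun x => F x ^ 2) (gaussianReal 0 1) :=
    Integrable.of_bound (hFc.pow 2).aestronglyMeasurable 1
      (Filter.Eventually.of_forall fun x => by
        rw [Real.norm_eq_abs, abs_of_nonneg (sq_nonneg _)]; exact hsq x)
  have hi2 : Integrable F' (gaussianReal 0 1) :=
    Integrable.of_bound hF'm.aestronglyMeasurable _ (Filter.Eventually.of_forall hC')
  have hk : ∀ k : ℝ, ∫ x, θ * (k - F x ^ 2) ∂(gaussianReal 0 1) =
      θ * (k - ∫ x, F x ^ 2 ∂(gaussianReal 0 1)) := by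
    intro k
    rw [integral_const_mul, integral_sub (integrable_const _) hi1]
    simp
  constructor
  · rw [← hk]
    exact integral_mono (((integrable_const _).sub hi1).const_mul _) hi2 hl
  · rw [← hk]
    exact integral_mono hi2 (((integrable_const _).sub hi1).const_mul _) hu

end Stein

section Prob

lemma gauss_ibp {Ω E : Type*} [MeasurableSpace Ω] [MeasurableSpace E] (μ : Measure Ω)
    [IsProbabilityMeasure μ] (x : Ω → ℝ) (r : Ω → E) (hx : Measurable x) (hr : Measurable r)
    (hxr : IndepFun x r μ) (hlaw : Measure.map x μ = gaussianReal 0 1)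
    (F F' : ℝ → E → ℝ) (hFm : Measurable (Function.uncurry F)) (θ κ : ℝ) (hθ : 0 ≤ θ)
    (hF : ∀ y e, HasDerivAt (fun y => F y e) (F' y e) y)
    (hC : ∀ y e, |F y e| ≤ 1)
    (hl : ∀ y e, θ * (κ - F y e ^ 2) ≤ F' y e) (hu : ∀ y e, F' y e ≤ θ * (1 - F y e ^ 2)) :
    θ * (κ - ∫ ω, F (x ω) (r ω) ^ 2 ∂μ) ≤ ∫ ω, x ω * F (x ω) (r ω) ∂μ ∧
    ∫ ω, x ω * F (x ω) (r ω) ∂μ ≤ θ * (1 - ∫ ω, F (x ω) (r ω) ^ 2 ∂μ) := by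
  set ν := Measure.map r μ with hν
  have : IsProbabilityMeasure ν := Measure.isProbabilityMeasure_map hr.aemeasurable
  have hprod : Measure.map (fun ω => (x ω, r ω)) μ = (gaussianReal 0 1).prod ν := by
    rw [← hlaw]
    exact (indepFun_iff_map_prod_eq_prod_map_map hx.aemeasurable hr.aemeasurable).1 hxr
  have hxm : Measurable fun ω => (x ω, r ω) := hx.prodMk hr
  have e1 : ∫ ω, F (x ω) (r ω) ^ 2 ∂μ =
      ∫ p, Function.uncurry F p ^ 2 ∂((gaussianReal 0 1).prod ν) := by
    rw [← hprod, integral_map hxm.aemeasurable (hFm.pow_const 2).aestronglyMeasurable]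
    rfl
  have e2 : ∫ ω, x ω * F (x ω) (r ω) ∂μ =
      ∫ p, p.1 * Function.uncurry F p ∂((gaussianReal 0 1).prod ν) := by
    have hm : Measurable (fun p : ℝ × E => p.1 * Function.uncurry F p) := measurable_fst.mul hFm
    rw [← hprod, integral_map hxm.aemeasurable hm.aestronglyMeasurable]
    rfl
  have hsq : ∀ y e, F y e ^ 2 ≤ 1 := fun y e => by
    have := hC y e; rw [← sq_abs]; nlinarith [abs_nonneg (F y e)]
  have i1 : Integrable (fun p => Function.uncurry F p ^ 2) ((gaussianReal 0 1).prod ν) :=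
    Integrable.of_bound (hFm.pow_const 2).aestronglyMeasurable 1
      (Filter.Eventually.of_forall fun p => by
        rw [Real.norm_eq_abs, abs_of_nonneg (sq_nonneg _)]; exact hsq _ _)
  have i0 : Integrable (fun p : ℝ × E => p.1) ((gaussianReal 0 1).prod ν) :=
    ((memLp_id_gaussianReal (μ := 0) (v := 1) 1).integrable le_rfl).comp_fst ν
  have i2 : Integrable (fun p => p.1 * Function.uncurry F p) ((gaussianReal 0 1).prod ν) :=
    i0.mul_bdd hFm.aestronglyMeasurable
      (Filter.Eventually.of_forall fun p => by rw [Real.norm_eq_abs]; exact hC _ _)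
  rw [e1, e2, integral_prod_symm _ i1, integral_prod_symm _ i2]
  have j1 := i1.integral_prod_right
  have j2 := i2.integral_prod_right
  have hk : ∀ k : ℝ, ∫ e, θ * (k - ∫ y, Function.uncurry F (y, e) ^ 2 ∂(gaussianReal 0 1)) ∂ν =
      θ * (k - ∫ e, ∫ y, Function.uncurry F (y, e) ^ 2 ∂(gaussianReal 0 1) ∂ν) := by
    intro k
    rw [integral_const_mul, integral_sub (integrable_const _) j1]
    simp
  have hst := fun e => stein_bounds (fun y => F y e) (fun y => F' y e) (fun y => hF y e) θ κ
    (fun y => hC y e) (fun y => hl y e) (fun y => hu y e) hθ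
  constructor
  · rw [← hk]
    exact integral_mono (((integrable_const _).sub j1).const_mul _) j2 fun e => (hst e).1
  · rw [← hk]
    exact integral_mono j2 (((integrable_const _).sub j1).const_mul _) fun e => (hst e).2

end Prob

section Model

/-- The negative Hamiltonian. -/
def XN (N : ℕ) (c d : ℝ) (g : Fin N → Fin N → ℝ) : Matrix (Conf N) (Conf N) ℂ :=
  c • (-(UN N g)) + d • ∑ j : Fin N, Sx N j

lemma neg_HN (N : ℕ) (c d : ℝ) (g : Fin N → Fin N → ℝ) :
    (-(1 : ℝ)) • HN N c d g = XN N c d g := by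
  unfold HN XN
  rw [smul_sub, smul_neg, neg_smul, neg_smul, one_smul, one_smul]
  abel

lemma Sz_sq (N : ℕ) (j : Fin N) : Sz N j * Sz N j = 1 := by
  unfold Sz
  rw [Matrix.diagonal_mul_diagonal, ← Matrix.diagonal_one]
  congr 1
  ext σ
  split_ifs <;> simp

lemma Sz_herm (N : ℕ) (j : Fin N) : (Sz N j).IsHermitian := by
  unfold Sz
  refine Matrix.isHermitian_diagonal_of_self_adjoint _ ?_
  ext σ
  simp only [Pi.star_apply]
  split_ifs <;> simp

lemma Sz_comm (N : ℕ) (j k : Fin N) : Sz N j * Sz N k = Sz N k * Sz N j := by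
  unfold Sz
  rw [Matrix.diagonal_mul_diagonal, Matrix.diagonal_mul_diagonal]
  simp only [mul_comm]

lemma SzSz_herm (N : ℕ) (j k : Fin N) : (Sz N j * Sz N k).IsHermitian := by
  unfold Matrix.IsHermitian
  rw [Matrix.conjTranspose_mul, (Sz_herm N j).eq, (Sz_herm N k).eq, Sz_comm]

lemma SzSz_sq (N : ℕ) (j k : Fin N) : (Sz N j * Sz N k) * (Sz N j * Sz N k) = 1 := by
  calc _ = Sz N j * (Sz N k * Sz N j) * Sz N k := by simp only [Matrix.mul_assoc]
    _ = (Sz N j * Sz N j) * (Sz N k * Sz N k) := by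
      rw [← Sz_comm N j k]; simp only [Matrix.mul_assoc]
    _ = 1 := by rw [Sz_sq, Sz_sq, Matrix.one_mul]

lemma fin2_flip (a : Fin 2) : 1 - (1 - a) = a := by
  fin_cases a <;> rfl

lemma conf_flip_flip {N : ℕ} (σ : Conf N) (j : Fin N) :
    Function.update (Function.update σ j (1 - σ j)) j
      (1 - (Function.update σ j (1 - σ j)) j) = σ := by
  simp

lemma flip_iff {N : ℕ} (σ τ : Conf N) (j : Fin N) :
    τ = Function.update σ j (1 - σ j) ↔ σ = Function.update τ j (1 - τ j) := by
  constructor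
  · rintro rfl; exact (conf_flip_flip σ j).symm
  · intro h; rw [h]; exact (conf_flip_flip τ j).symm

lemma Sx_herm (N : ℕ) (j : Fin N) : (Sx N j).IsHermitian := by
  ext σ τ
  rw [Matrix.conjTranspose_apply]
  simp only [Sx, Matrix.of_apply]
  by_cases h : σ = Function.update τ j (1 - τ j)
  · rw [if_pos h, if_pos ((flip_iff σ τ j).2 h)]; simp
  · rw [if_neg h, if_neg fun h' => h ((flip_iff σ τ j).1 h')]; simp

lemma Sx_sq (N : ℕ) (j : Fin N) : Sx N j * Sx N j = 1 := by
  ext σ τ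
  rw [Matrix.mul_apply]
  simp only [Sx, Matrix.of_apply, ite_mul, one_mul, zero_mul]
  rw [Finset.sum_ite_eq' Finset.univ (Function.update σ j (1 - σ j))]
  rw [if_pos (Finset.mem_univ _), conf_flip_flip, Matrix.one_apply]
  by_cases h : σ = τ
  · rw [if_pos h, if_pos h.symm]
  · rw [if_neg h, if_neg fun h' => h h'.symm]

lemma Sx_diag (N : ℕ) (j : Fin N) (σ : Conf N) : Sx N j σ σ = 0 := by
  simp only [Sx, Matrix.of_apply]
  rw [if_neg]
  intro h
  have := congrFun h j
  simp only [Function.update_self] at this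
  generalize σ j = a at this
  fin_cases a <;> simp at this

lemma SzSxSz_same (N : ℕ) (j : Fin N) : Sz N j * Sx N j * Sz N j = - Sx N j := by
  ext σ τ
  unfold Sz
  rw [Matrix.mul_diagonal, Matrix.diagonal_mul, Matrix.neg_apply]
  simp only [Sx, Matrix.of_apply]
  by_cases h : τ = Function.update σ j (1 - σ j)
  · rw [if_pos h, h]
    simp only [Function.update_self]
    generalize σ j = a
    fin_cases a <;> simp
  · rw [if_neg h]; simp

lemma SzSxSz_ne (N : ℕ) (j k : Fin N) (hjk : j ≠ k) : Sz N j * Sx N k * Sz N j = Sx N k := by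
  ext σ τ
  unfold Sz
  rw [Matrix.mul_diagonal, Matrix.diagonal_mul]
  simp only [Sx, Matrix.of_apply]
  by_cases h : τ = Function.update σ k (1 - σ k)
  · rw [if_pos h, h]
    simp only [Function.update_of_ne hjk]
    split_ifs <;> simp
  · rw [if_neg h]; simp

lemma UN_diag (N : ℕ) (g : Fin N → Fin N → ℝ) :
    ∃ v : Conf N → ℝ, UN N g = Matrix.diagonal (fun σ => (v σ : ℂ)) := by
  refine ⟨fun σ => -(1 / Real.sqrt N) * ∑ j : Fin N, ∑ k : Fin N,
    if j < k then g j k * ((if σ j = 0 then 1 else -1) * (if σ k = 0 then 1 else -1)) else 0, ?_⟩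
  ext σ τ
  unfold UN Sz
  rw [Matrix.smul_apply, Matrix.sum_apply]
  simp only [Matrix.sum_apply, Matrix.diagonal_mul_diagonal]
  have : ∀ j k : Fin N, (if j < k then g j k • (Matrix.diagonal fun σ : Conf N =>
      ((if σ j = 0 then (1 : ℂ) else -1) * (if σ k = 0 then 1 else -1))) else 0) σ τ =
      if σ = τ then (((if j < k then g j k * ((if σ j = 0 then 1 else -1) *
        (if σ k = 0 then 1 else -1)) else 0 : ℝ)) : ℂ) else 0 := by
    intro j k
    by_cases hjk : j < k
    · by_cases hst : σ = τ
      · subst hst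
        simp only [hjk, if_true, Matrix.smul_apply, Matrix.diagonal_apply_eq]
        split_ifs <;> simp
      · simp [hjk, hst]
    · simp [hjk]
  simp only [this]
  by_cases hst : σ = τ
  · subst hst
    simp
  · simp [hst]

lemma UN_herm (N : ℕ) (g : Fin N → Fin N → ℝ) : (UN N g).IsHermitian := by
  obtain ⟨v, hv⟩ := UN_diag N g
  rw [hv]
  refine Matrix.isHermitian_diagonal_of_self_adjoint _ ?_
  ext σ
  simp

lemma smul_herm {n : Type*} (r : ℝ) (A : Matrix n n ℂ) (h : A.IsHermitian) :
    (r • A).IsHermitian := by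
  unfold Matrix.IsHermitian
  rw [Matrix.conjTranspose_smul, h.eq]; simp

lemma sum_Sx_herm (N : ℕ) : (∑ j : Fin N, Sx N j).IsHermitian := by
  unfold Matrix.IsHermitian
  rw [Matrix.conjTranspose_sum]
  exact Finset.sum_congr rfl fun j _ => (Sx_herm N j).eq

lemma XN_herm (N : ℕ) (c d : ℝ) (g : Fin N → Fin N → ℝ) : (XN N c d g).IsHermitian :=
  (smul_herm _ _ (UN_herm N g).neg).add (smul_herm _ _ (sum_Sx_herm N))

lemma Sz_UN (N : ℕ) (g : Fin N → Fin N → ℝ) (j : Fin N) :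
    Sz N j * UN N g * Sz N j = UN N g := by
  obtain ⟨v, hv⟩ := UN_diag N g
  have hc : Sz N j * UN N g = UN N g * Sz N j := by
    rw [hv]; unfold Sz
    rw [Matrix.diagonal_mul_diagonal, Matrix.diagonal_mul_diagonal]
    simp only [mul_comm]
  rw [hc, Matrix.mul_assoc, Sz_sq, Matrix.mul_one]

lemma Sz_sum (N : ℕ) (j : Fin N) :
    Sz N j * (∑ l : Fin N, Sx N l) * Sz N j = ∑ l : Fin N, Sx N l - (2 : ℝ) • Sx N j := by
  rw [Matrix.mul_sum, Matrix.sum_mul, ← Finset.add_sum_erase _ _ (Finset.mem_univ j),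
    ← Finset.add_sum_erase _ (fun l => Sx N l) (Finset.mem_univ j), SzSxSz_same, two_smul]
  have : ∑ l ∈ Finset.univ.erase j, Sz N j * Sx N l * Sz N j =
      ∑ l ∈ Finset.univ.erase j, Sx N l :=
    Finset.sum_congr rfl fun l hl => SzSxSz_ne N j l (Finset.ne_of_mem_erase hl).symm
  rw [this]
  abel

lemma Sz_XN (N : ℕ) (c d : ℝ) (g : Fin N → Fin N → ℝ) (j : Fin N) :
    Sz N j * XN N c d g * Sz N j = XN N c d g - (2 * d) • Sx N j := by
  have h : Sz N j * XN N c d g * Sz N j = c • (-(Sz N j * UN N g * Sz N j)) +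
      d • (Sz N j * (∑ l : Fin N, Sx N l) * Sz N j) := by
    unfold XN
    rw [Matrix.mul_add, Matrix.add_mul, Matrix.mul_smul, Matrix.smul_mul, Matrix.mul_smul,
      Matrix.smul_mul, Matrix.mul_neg, Matrix.neg_mul]
  rw [h, Sz_UN, Sz_sum, smul_sub, smul_smul, mul_comm d 2]
  unfold XN
  abel

lemma SzSz_XN (N : ℕ) (c d : ℝ) (g : Fin N → Fin N → ℝ) (j k : Fin N) (hjk : j ≠ k) :
    (Sz N j * Sz N k) * XN N c d g * (Sz N j * Sz N k) =
      XN N c d g - ((2 * d) • Sx N j + (2 * d) • Sx N k) := by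
  have h : (Sz N j * Sz N k) * XN N c d g * (Sz N j * Sz N k) =
      Sz N j * (Sz N k * XN N c d g * Sz N k) * Sz N j := by
    nth_rewrite 2 [Sz_comm N j k]
    simp only [Matrix.mul_assoc]
  rw [h, Sz_XN, Matrix.mul_sub, Matrix.sub_mul, Sz_XN, Matrix.mul_smul, Matrix.smul_mul,
    SzSxSz_ne N j k hjk]
  abel

lemma TT_smul {n : Type*} [Fintype n] [DecidableEq n] (X A : Matrix n n ℂ) (r : ℝ) :
    TT X (r • A) = r * TT X A := by
  unfold TT; rw [Matrix.mul_smul, rtr_smul]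

lemma TT_add {n : Type*} [Fintype n] [DecidableEq n] (X A B : Matrix n n ℂ) :
    TT X (A + B) = TT X A + TT X B := by
  unfold TT; rw [Matrix.mul_add, rtr_add]

lemma TT_sum {n ι : Type*} [Fintype n] [DecidableEq n] (X : Matrix n n ℂ) (s : Finset ι)
    (f : ι → Matrix n n ℂ) :
    TT X (∑ i ∈ s, f i) = ∑ i ∈ s, TT X (f i) := by
  unfold TT; rw [Matrix.mul_sum, rtr_sum]

lemma TT_Sx_le (N : ℕ) (c d : ℝ) (g : Fin N → Fin N → ℝ) (j : Fin N) :
    d * TT (XN N c d g) (Sx N j) ≤ d ^ 2 * ZZ (XN N c d g) := by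
  have h := TT_comm_le (XN N c d g) (Sz N j) (XN_herm N c d g) (Sz_herm N j) (Sz_sq N j)
  rw [Sz_XN, sub_sub_cancel, Matrix.smul_mul, Matrix.mul_smul, Sx_sq, TT_smul, TT_smul,
    TT_smul] at h
  have h1 : TT (XN N c d g) 1 = ZZ (XN N c d g) := by unfold TT ZZ; rw [Matrix.mul_one]
  rw [h1] at h
  nlinarith

lemma phi_int_ge (N : ℕ) (c d : ℝ) (g : Fin N → Fin N → ℝ) (j k : Fin N) (hjk : j ≠ k) :
    (1 - 2 * d ^ 2) * ZZ (XN N c d g) ≤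
      ∫ s in (0 : ℝ)..1, phi (XN N c d g) (Sz N j * Sz N k) s := by
  have h := phi_ge (XN N c d g) (Sz N j * Sz N k) (XN_herm N c d g) (SzSz_herm N j k)
    (SzSz_sq N j k)
  rw [SzSz_XN _ _ _ _ _ _ hjk, sub_sub_cancel, TT_add, TT_smul, TT_smul] at h
  have h1 := TT_Sx_le N c d g j
  have h2 := TT_Sx_le N c d g k
  have h3 : ∀ s ∈ Set.Icc (0 : ℝ) 1, ZZ (XN N c d g) - s * (4 * d ^ 2 * ZZ (XN N c d g)) ≤
      phi (XN N c d g) (Sz N j * Sz N k) s := by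
    intro s hs
    refine le_trans ?_ (h s)
    have : 2 * d * TT (XN N c d g) (Sx N j) + 2 * d * TT (XN N c d g) (Sx N k) ≤
      4 * d ^ 2 * ZZ (XN N c d g) := by linarith
    linarith [mul_le_mul_of_nonneg_left this hs.1]
  have h4 := intervalIntegral.integral_mono_on (μ := volume) (zero_le_one' ℝ)
    ((by fun_prop : Continuous fun s : ℝ =>
      ZZ (XN N c d g) - s * (4 * d ^ 2 * ZZ (XN N c d g))).intervalIntegrable 0 1)
    ((phi_continuous (XN N c d g) (Sz N j * Sz N k)).intervalIntegrable 0 1) h3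
  refine le_trans (le_of_eq ?_) h4
  rw [intervalIntegral.integral_sub (by simp) ((by fun_prop : Continuous fun s : ℝ =>
      s * (4 * d ^ 2 * ZZ (XN N c d g))).intervalIntegrable 0 1),
    intervalIntegral.integral_mul_const, integral_id]
  simp
  ring

lemma phi_int_le (X A : Matrix (Conf N) (Conf N) ℂ) (hX : X.IsHermitian) (hA : A.IsHermitian)
    (hA2 : A * A = 1) : ∫ s in (0 : ℝ)..1, phi X A s ≤ ZZ X := by
  have h4 := intervalIntegral.integral_mono_on (μ := volume) (zero_le_one' ℝ)
    ((phi_continuous X A).intervalIntegrable 0 1)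
    ((continuous_const (y := ZZ X)).intervalIntegrable 0 1)
    (fun s hs => phi_le X A hX hA hA2 s hs.1 hs.2)
  simpa using h4

/-- Gibbs expectation of `A` -/
def mag (N : ℕ) (c d : ℝ) (g : Fin N → Fin N → ℝ) (A : Matrix (Conf N) (Conf N) ℂ) : ℝ :=
  TT (XN N c d g) A / ZZ (XN N c d g)

lemma gibbs_eq (N : ℕ) (c d : ℝ) (g : Fin N → Fin N → ℝ) (A : Matrix (Conf N) (Conf N) ℂ) :
    gibbs 1 (HN N c d g) A = mag N c d g A := by
  unfold gibbs mag
  rw [neg_HN, trace_exp _ (XN_herm N c d g), Complex.div_ofReal_re]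
  rfl

lemma XN_add (N : ℕ) (c a d e : ℝ) (g : Fin N → Fin N → ℝ) :
    XN N (c + a) (d + e) g = XN N c d g + (a • (-(UN N g)) + e • ∑ j : Fin N, Sx N j) := by
  unfold XN
  rw [add_smul, add_smul]
  abel

lemma logZ_step (N : ℕ) (c d h : ℝ) (hd : 0 < d) (hh : 0 ≤ h) (g : Fin N → Fin N → ℝ) :
    Real.log (ZZ (XN N c d g)) ≤ Real.log (ZZ (XN N c (d - h) g)) + N * h * d := by
  have h1 := peierls_bogoliubov (XN N c d g) ((-h) • ∑ j : Fin N, Sx N j) (XN_herm N c d g)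
    (smul_herm _ _ (sum_Sx_herm N))
  have h2 : XN N c d g + (-h) • ∑ j : Fin N, Sx N j = XN N c (d - h) g := by
    have := XN_add N c 0 d (-h) g
    rw [zero_smul, zero_add, add_zero] at this
    rw [← this, sub_eq_add_neg]
  rw [h2, TT_smul, TT_sum] at h1
  have hZ := ZZ_pos (XN N c d g) (XN_herm N c d g)
  have h3 : ∑ j : Fin N, TT (XN N c d g) (Sx N j) ≤ N * (d * ZZ (XN N c d g)) := by
    calc _ ≤ ∑ j : Fin N, d * ZZ (XN N c d g) := by
          refine Finset.sum_le_sum fun j _ => ?_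
          have := TT_Sx_le N c d g j
          have h5 : d * TT (XN N c d g) (Sx N j) ≤ d * (d * ZZ (XN N c d g)) := by linarith
          exact le_of_mul_le_mul_left h5 hd
      _ = _ := by simp
  have h4 : h * (∑ j : Fin N, TT (XN N c d g) (Sx N j)) / ZZ (XN N c d g) ≤ N * h * d := by
    rw [div_le_iff₀ hZ]
    linarith [mul_le_mul_of_nonneg_left h3 hh]
  rw [neg_mul, neg_div] at h1
  linarith

lemma logZ_steps (N : ℕ) (c h : ℝ) (hh : 0 < h) (g : Fin N → Fin N → ℝ) (i : ℕ) :
    Real.log (ZZ (XN N c (i * h) g)) ≤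
      Real.log (ZZ (XN N c 0 g)) + N * h ^ 2 * (i * (i + 1) / 2) := by
  induction i with
  | zero => simp
  | succ i ih =>
    have := logZ_step N c ((i + 1 : ℕ) * h) h (by positivity) hh.le g
    have e : ((i + 1 : ℕ) : ℝ) * h - h = i * h := by push_cast; ring
    rw [e] at this
    push_cast at this ⊢
    nlinarith

lemma logZ_upper (N : ℕ) (c d : ℝ) (hd : 0 < d) (g : Fin N → Fin N → ℝ) :
    Real.log (ZZ (XN N c d g)) ≤ Real.log (ZZ (XN N c 0 g)) + N * (0.525 * d ^ 2) := by
  have := logZ_steps N c (d / 20) (by positivity) g 20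
  have e : ((20 : ℕ) : ℝ) * (d / 20) = d := by push_cast; ring
  rw [e] at this
  push_cast at this
  linarith

lemma logZ_lower (N : ℕ) (c d : ℝ) (g : Fin N → Fin N → ℝ) :
    Real.log (ZZ (XN N c 0 g)) ≤ Real.log (ZZ (XN N c d g)) := by
  have h1 := peierls_bogoliubov (XN N c 0 g) (d • ∑ j : Fin N, Sx N j) (XN_herm N c 0 g)
    (smul_herm _ _ (sum_Sx_herm N))
  have h2 : XN N c 0 g + d • ∑ j : Fin N, Sx N j = XN N c d g := by
    have := XN_add N c 0 0 d g
    rw [zero_smul, zero_add, zero_add, add_zero] at this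
    rw [← this]
  have h3 : ∀ j, TT (XN N c 0 g) (Sx N j) = 0 := by
    intro j
    obtain ⟨v, hv⟩ := UN_diag N g
    have h4 : XN N c 0 g = Matrix.diagonal (c • (-(fun σ => (v σ : ℂ)))) := by
      unfold XN
      rw [hv, zero_smul, add_zero, Matrix.diagonal_neg, Matrix.diagonal_smul]
      rfl
    unfold TT rtr
    rw [h4, Matrix.exp_diagonal, Matrix.trace]
    simp only [Matrix.diag_apply, Matrix.diagonal_mul, Sx_diag, mul_zero, Finset.sum_const_zero,
      Complex.zero_re]
  rw [h2, TT_smul, TT_sum] at h1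
  simpa [h3] using h1

/-- The pathwise convexity bound. -/
lemma pathwise (N : ℕ) (c d a : ℝ) (hd : 0 < d) (g : Fin N → Fin N → ℝ) :
    a * mag N c d g (-(UN N g)) ≤
      a * mag N (c + a) 0 g (-(UN N g)) + N * (0.525 * d ^ 2) := by
  have h1 := peierls_bogoliubov (XN N c d g) (a • (-(UN N g))) (XN_herm N c d g)
    (smul_herm _ _ (UN_herm N g).neg)
  have h2 := peierls_bogoliubov (XN N (c + a) 0 g) ((-a) • (-(UN N g))) (XN_herm N (c + a) 0 g)
    (smul_herm _ _ (UN_herm N g).neg)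
  have e1 : XN N c d g + a • (-(UN N g)) = XN N (c + a) d g := by
    have := XN_add N c a d 0 g
    rw [zero_smul, add_zero, add_zero] at this
    rw [← this]
  have e2 : XN N (c + a) 0 g + (-a) • (-(UN N g)) = XN N c 0 g := by
    have := XN_add N (c + a) (-a) 0 0 g
    rw [zero_smul, add_zero, add_zero, add_neg_cancel_right] at this
    rw [← this]
  rw [e1, TT_smul] at h1
  rw [e2, TT_smul] at h2
  have h3 := logZ_upper N (c + a) d hd g
  have h4 := logZ_lower N c d g
  unfold mag
  rw [neg_mul, neg_div] at h2
  rw [mul_div_assoc] at h1 h2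
  linarith

lemma mag_UN (N : ℕ) (c d : ℝ) (g : Fin N → Fin N → ℝ) :
    mag N c d g (-(UN N g)) = (1 / Real.sqrt N) * ∑ j : Fin N, ∑ k : Fin N,
      if j < k then g j k * mag N c d g (Sz N j * Sz N k) else 0 := by
  have h : -(UN N g) = (1 / Real.sqrt N) • ∑ j : Fin N, ∑ k : Fin N,
    if j < k then g j k • (Sz N j * Sz N k) else 0 := by
    unfold UN; rw [neg_smul, neg_neg]
  have : TT (XN N c d g) (-(UN N g)) = (1 / Real.sqrt N) * ∑ j : Fin N, ∑ k : Fin N,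
      if j < k then g j k * TT (XN N c d g) (Sz N j * Sz N k) else 0 := by
    rw [h, TT_smul, TT_sum]
    congr 1
    refine Finset.sum_congr rfl fun j _ => ?_
    rw [TT_sum]
    refine Finset.sum_congr rfl fun k _ => ?_
    split_ifs
    · rw [TT_smul]
    · simp [TT, rtr]
  unfold mag
  rw [this, mul_div_assoc, Finset.sum_div]
  congr 1
  refine Finset.sum_congr rfl fun j _ => ?_
  rw [Finset.sum_div]
  refine Finset.sum_congr rfl fun k _ => ?_
  split_ifs
  · rw [mul_div_assoc]
  · simp

lemma abs_mag_le (N : ℕ) (c d : ℝ) (g : Fin N → Fin N → ℝ) (j k : Fin N) :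
    |mag N c d g (Sz N j * Sz N k)| ≤ 1 := by
  have hZ := ZZ_pos (XN N c d g) (XN_herm N c d g)
  unfold mag
  rw [abs_div, abs_of_pos hZ, div_le_one hZ]
  exact abs_TT_le _ _ (XN_herm N c d g) (SzSz_herm N j k) (SzSz_sq N j k)

lemma XN_continuous (N : ℕ) (c d : ℝ) : Continuous (XN N c d) := by
  have h : Continuous fun g : Fin N → Fin N → ℝ => ∑ j : Fin N, ∑ k : Fin N,
      if j < k then g j k • (Sz N j * Sz N k) else 0 := by
    refine continuous_finsetSum _ fun j _ => continuous_finsetSum _ fun k _ => ?_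
    split_ifs
    · fun_prop
    · fun_prop
  exact ((h.const_smul (-(1 / Real.sqrt N))).neg.const_smul c).add continuous_const

lemma mag_continuous (N : ℕ) (c d : ℝ) (A : Matrix (Conf N) (Conf N) ℂ) :
    Continuous (fun g => mag N c d g A) := by
  unfold mag
  exact ((continuous_TT A).comp (XN_continuous N c d)).div
    (continuous_ZZ.comp (XN_continuous N c d)) fun g => (ZZ_pos _ (XN_herm N c d g)).ne'

/-- replace the entry `(j,k)` of `g` by `x` -/
def upd {N : ℕ} (j k : Fin N) (x : ℝ) (g : Fin N → Fin N → ℝ) : Fin N → Fin N → ℝ :=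
  fun j' k' => if j' = j ∧ k' = k then x else g j' k'

lemma UN_upd (N : ℕ) (j k : Fin N) (hjk : j < k) (x : ℝ) (g : Fin N → Fin N → ℝ) :
    -(UN N (upd j k x g)) =
      -(UN N (upd j k 0 g)) + x • ((1 / Real.sqrt N) • (Sz N j * Sz N k)) := by
  have h : ∀ g, -(UN N g) = (1 / Real.sqrt N) • ∑ j : Fin N, ∑ k : Fin N,
    if j < k then g j k • (Sz N j * Sz N k) else 0 := by
    intro g; unfold UN; rw [neg_smul, neg_neg]
  rw [h, h, smul_comm x, ← smul_add]
  congr 1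
  have e : x • (Sz N j * Sz N k) = ∑ j' : Fin N, ∑ k' : Fin N,
      if j' = j then (if k' = k then x • (Sz N j * Sz N k) else 0) else 0 := by
    simp
  rw [e, ← Finset.sum_add_distrib]
  refine Finset.sum_congr rfl fun j' _ => ?_
  rw [← Finset.sum_add_distrib]
  refine Finset.sum_congr rfl fun k' _ => ?_
  unfold upd
  by_cases h1 : j' = j
  · by_cases h2 : k' = k
    · subst h1 h2; simp [hjk]
    · simp [h2]
  · simp [h1]

lemma XN_upd (N : ℕ) (c d : ℝ) (j k : Fin N) (hjk : j < k) (x : ℝ) (g : Fin N → Fin N → ℝ) :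
    XN N c d (upd j k x g) =
      XN N c d (upd j k 0 g) + (c / Real.sqrt N * x) • (Sz N j * Sz N k) := by
  unfold XN
  rw [UN_upd N j k hjk x g, smul_add, smul_smul, smul_smul]
  have : c * x * (1 / Real.sqrt N) = c / Real.sqrt N * x := by ring
  rw [this]
  abel

/-- derivative of the magnetization in one coupling -/
def dmag (N : ℕ) (c d : ℝ) (g : Fin N → Fin N → ℝ) (A : Matrix (Conf N) (Conf N) ℂ) : ℝ :=
  (∫ s in (0 : ℝ)..1, phi (XN N c d g) A s) / ZZ (XN N c d g) - mag N c d g A ^ 2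

lemma hasDerivAt_mag (N : ℕ) (c d : ℝ) (j k : Fin N) (hjk : j < k) (x : ℝ)
    (g : Fin N → Fin N → ℝ) :
    HasDerivAt (fun x => mag N c d (upd j k x g) (Sz N j * Sz N k))
      (c / Real.sqrt N * dmag N c d (upd j k x g) (Sz N j * Sz N k)) x := by
  set A := Sz N j * Sz N k with hA
  set θ := c / Real.sqrt N with hθ
  set X := XN N c d (upd j k 0 g) with hX
  have hup : ∀ x, XN N c d (upd j k x g) = X + (θ * x) • A := fun x =>
    XN_upd N c d j k hjk x g
  have hZ := ZZ_pos _ (XN_herm N c d (upd j k x g))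
  have hl : HasDerivAt (fun x : ℝ => θ * x) θ x := by
    simpa using (hasDerivAt_id x).const_mul θ
  have h1 := (hasDerivAt_TT X A (θ * x)).comp x hl
  have h2 := (hasDerivAt_ZZ X A (θ * x)).comp x hl
  have h3 := h1.div h2 (by simp only [Function.comp]; rw [← hup]; exact hZ.ne')
  have e : (fun x => mag N c d (upd j k x g) A) =
      fun x => TT (X + (θ * x) • A) A / ZZ (X + (θ * x) • A) := by
    ext y; unfold mag; rw [hup]
  rw [e]
  refine h3.congr_deriv ?_
  unfold dmag mag
  rw [hup] at hZ
  simp only [hup, Function.comp]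
  field_simp

lemma dmag_bounds (N : ℕ) (c d : ℝ) (g : Fin N → Fin N → ℝ) (j k : Fin N) (hjk : j < k) :
    (1 - 2 * d ^ 2) - mag N c d g (Sz N j * Sz N k) ^ 2 ≤ dmag N c d g (Sz N j * Sz N k) ∧
    dmag N c d g (Sz N j * Sz N k) ≤ 1 - mag N c d g (Sz N j * Sz N k) ^ 2 := by
  have hZ := ZZ_pos _ (XN_herm N c d g)
  unfold dmag
  constructor
  · gcongr
    rw [le_div_iff₀ hZ]
    exact phi_int_ge N c d g j k hjk.ne
  · gcongr
    rw [div_le_one hZ]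
    exact phi_int_le _ _ (XN_herm N c d g) (SzSz_herm N j k) (SzSz_sq N j k)

end Model

section Disorder

lemma UN_congr (N : ℕ) (g g' : Fin N → Fin N → ℝ) (h : ∀ j k, j < k → g j k = g' j k) :
    UN N g = UN N g' := by
  unfold UN
  congr 1
  refine Finset.sum_congr rfl fun j _ => Finset.sum_congr rfl fun k _ => ?_
  split_ifs with hjk
  · rw [h j k hjk]
  · rfl

lemma mag_congr (N : ℕ) (c d : ℝ) (g g' : Fin N → Fin N → ℝ) (A : Matrix (Conf N) (Conf N) ℂ)
    (h : ∀ j k, j < k → g j k = g' j k) : mag N c d g A = mag N c d g' A := by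
  unfold mag XN
  rw [UN_congr N g g' h]

/-- index type of pairs -/
abbrev Prs (N : ℕ) := {q : Fin N × Fin N // q.1 < q.2}

open Classical in
/-- extend couplings on a finite set of pairs by zero -/
def extz {N : ℕ} (T : Finset (Prs N)) (e : T → ℝ) : Fin N → Fin N → ℝ := fun j k =>
  if h : ∃ hjk : j < k, (⟨(j, k), hjk⟩ : Prs N) ∈ T then e ⟨⟨(j, k), h.1⟩, h.2⟩ else 0

lemma measurable_extz {N : ℕ} (T : Finset (Prs N)) : Measurable (extz T) := by
  refine measurable_pi_lambda _ fun j => measurable_pi_lambda _ fun k => ?_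
  unfold extz
  by_cases h : ∃ hjk : j < k, (⟨(j, k), hjk⟩ : Prs N) ∈ T
  · simp only [h, dif_pos]; exact measurable_pi_apply _
  · simp only [h, dif_neg, not_false_iff]; exact measurable_const

lemma measurable_upd {N : ℕ} (j k : Fin N) :
    Measurable (fun p : ℝ × (Fin N → Fin N → ℝ) => upd j k p.1 p.2) := by
  refine measurable_pi_lambda _ fun j' => measurable_pi_lambda _ fun k' => ?_
  unfold upd
  split_ifs
  · exact measurable_fst
  · exact (measurable_pi_apply k').comp ((measurable_pi_apply j').comp measurable_snd)

open Classical in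
lemma pair_ibp {Ω : Type*} [MeasurableSpace Ω] (μ : Measure Ω) [IsProbabilityMeasure μ]
    (N : ℕ) (g : Ω → Fin N → Fin N → ℝ)
    (hmeas : ∀ (j k : Fin N), Measurable fun ω => g ω j k)
    (hgauss : ∀ (j k : Fin N), j < k → Measure.map (fun ω => g ω j k) μ = gaussianReal 0 1)
    (hindep : iIndepFun (fun (p : Prs N) ω => g ω p.1.1 p.1.2) μ)
    (c d : ℝ) (hc : 0 ≤ c) (j k : Fin N) (hjk : j < k) :
    c / Real.sqrt N * ((1 - 2 * d ^ 2) - ∫ ω, mag N c d (g ω) (Sz N j * Sz N k) ^ 2 ∂μ) ≤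
      ∫ ω, g ω j k * mag N c d (g ω) (Sz N j * Sz N k) ∂μ ∧
    ∫ ω, g ω j k * mag N c d (g ω) (Sz N j * Sz N k) ∂μ ≤
      c / Real.sqrt N * (1 - ∫ ω, mag N c d (g ω) (Sz N j * Sz N k) ^ 2 ∂μ) := by
  set p : Prs N := ⟨(j, k), hjk⟩ with hp
  set T : Finset (Prs N) := Finset.univ.erase p with hT
  have hind := hindep.indepFun_finset ({p} : Finset (Prs N)) T
    (by rw [Finset.disjoint_singleton_left, hT]; simp)
    (fun i => hmeas i.1.1 i.1.2)
  have hev : Measurable (fun u : (({p} : Finset (Prs N)) → ℝ) =>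
      u ⟨p, Finset.mem_singleton_self p⟩) := measurable_pi_apply _
  have hind2 := hind.comp hev (measurable_id (α := T → ℝ))
  set r : Ω → T → ℝ := fun ω i => g ω i.1.1.1 i.1.1.2 with hr
  have hrm : Measurable r := measurable_pi_lambda _ fun i => hmeas _ _
  have hθ : 0 ≤ c / Real.sqrt N := by positivity
  have key := gauss_ibp μ (fun ω => g ω j k) r (hmeas j k) hrm hind2 (hgauss j k hjk)
    (fun x e => mag N c d (upd j k x (extz T e)) (Sz N j * Sz N k))
    (fun x e => c / Real.sqrt N * dmag N c d (upd j k x (extz T e)) (Sz N j * Sz N k))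
    ((mag_continuous N c d (Sz N j * Sz N k)).measurable.comp
      ((measurable_upd j k).comp (measurable_fst.prodMk
        ((measurable_extz T).comp measurable_snd))))
    (c / Real.sqrt N) (1 - 2 * d ^ 2) hθ
    (fun y e => hasDerivAt_mag N c d j k hjk y _)
    (fun y e => abs_mag_le N c d _ j k)
    (fun y e => mul_le_mul_of_nonneg_left (dmag_bounds N c d _ j k hjk).1 hθ)
    (fun y e => mul_le_mul_of_nonneg_left (dmag_bounds N c d _ j k hjk).2 hθ)
  have e : ∀ ω, mag N c d (upd j k (g ω j k) (extz T (r ω))) (Sz N j * Sz N k) =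
      mag N c d (g ω) (Sz N j * Sz N k) := by
    intro ω
    refine mag_congr _ _ _ _ _ _ fun j' k' hjk' => ?_
    unfold upd
    by_cases h : j' = j ∧ k' = k
    · rw [if_pos h, h.1, h.2]
    · rw [if_neg h]
      have hm : ∃ h2 : j' < k', (⟨(j', k'), h2⟩ : Prs N) ∈ T := by
        refine ⟨hjk', ?_⟩
        rw [hT, Finset.mem_erase]
        refine ⟨fun h3 => h ?_, Finset.mem_univ _⟩
        rw [hp, Subtype.mk.injEq, Prod.mk.injEq] at h3
        exact h3
      unfold extz
      rw [dif_pos hm]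
  simp only [e] at key
  exact key

lemma mag_meas {Ω : Type*} [MeasurableSpace Ω] (N : ℕ) (g : Ω → Fin N → Fin N → ℝ)
    (hmeas : ∀ (j k : Fin N), Measurable fun ω => g ω j k) (c d : ℝ)
    (A : Matrix (Conf N) (Conf N) ℂ) : Measurable fun ω => mag N c d (g ω) A :=
  (mag_continuous N c d A).measurable.comp
    (measurable_pi_lambda _ fun j => measurable_pi_lambda _ fun k => hmeas j k)

lemma pair_sum_const (N : ℕ) (r : ℝ) :
    ∑ j : Fin N, ∑ k : Fin N, (if j < k then r else 0) = N * ((N : ℝ) - 1) / 2 * r := by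
  have h1 : ∑ j : Fin N, ∑ k : Fin N, (if j < k then r else 0) =
      ∑ j : Fin N, ∑ k : Fin N, (if k < j then r else 0) := Finset.sum_comm
  have h2 : ∑ j : Fin N, ∑ k : Fin N, ((if j < k then r else 0) + (if k < j then r else 0) +
      (if k = j then r else 0)) = ∑ j : Fin N, ∑ k : Fin N, r := by
    refine Finset.sum_congr rfl fun j _ => Finset.sum_congr rfl fun k _ => ?_
    rcases lt_trichotomy j k with h | h | h
    · simp [h, h.not_gt, h.ne']
    · simp [h]
    · simp [h, h.not_gt, h.ne]
  simp only [Finset.sum_add_distrib] at h2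
  rw [← h1] at h2
  simp only [Finset.sum_ite_eq', Finset.mem_univ, if_true, Finset.sum_const, Finset.card_univ,
    Fintype.card_fin, nsmul_eq_mul] at h2
  linarith

lemma qN_eq (N : ℕ) (c d : ℝ) (g : Fin N → Fin N → ℝ) :
    qN N 1 c d g = (2 / ((N : ℝ) * ((N : ℝ) - 1))) * ∑ j : Fin N, ∑ k : Fin N,
      if j < k then mag N c d g (Sz N j * Sz N k) ^ 2 else 0 := by
  unfold qN
  simp only [gibbs_eq]

lemma mag_sq_le (N : ℕ) (c d : ℝ) (g : Fin N → Fin N → ℝ) (j k : Fin N) :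
    mag N c d g (Sz N j * Sz N k) ^ 2 ≤ 1 := by
  have := abs_mag_le N c d g j k
  rw [← sq_abs]; nlinarith [abs_nonneg (mag N c d g (Sz N j * Sz N k))]

lemma qN_nonneg (N : ℕ) (hN : 2 ≤ N) (c d : ℝ) (g : Fin N → Fin N → ℝ) : 0 ≤ qN N 1 c d g := by
  have h : (2 : ℝ) ≤ N := by exact_mod_cast hN
  rw [qN_eq]
  refine mul_nonneg (div_nonneg zero_le_two (mul_nonneg (by linarith) (by linarith))) ?_
  refine Finset.sum_nonneg fun j _ => Finset.sum_nonneg fun k _ => ?_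
  split_ifs <;> positivity

lemma qN_le (N : ℕ) (hN : 2 ≤ N) (c d : ℝ) (g : Fin N → Fin N → ℝ) : qN N 1 c d g ≤ 1 := by
  have h : (2 : ℝ) ≤ N := by exact_mod_cast hN
  have hp : (0 : ℝ) < N * ((N : ℝ) - 1) := mul_pos (by linarith) (by linarith)
  rw [qN_eq]
  have h1 : ∑ j : Fin N, ∑ k : Fin N,
      (if j < k then mag N c d g (Sz N j * Sz N k) ^ 2 else 0) ≤ N * ((N : ℝ) - 1) / 2 * 1 := by
    rw [← pair_sum_const]
    refine Finset.sum_le_sum fun j _ => Finset.sum_le_sum fun k _ => ?_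
    split_ifs
    · exact mag_sq_le _ _ _ _ _ _
    · rfl
  rw [div_mul_eq_mul_div, div_le_one hp]
  linarith

section Fixed

variable {Ω : Type*} [MeasurableSpace Ω] (μ : Measure Ω) [IsProbabilityMeasure μ]
    (N : ℕ) (g : Ω → Fin N → Fin N → ℝ)
    (hmeas : ∀ (j k : Fin N), Measurable fun ω => g ω j k)
    (hgauss : ∀ (j k : Fin N), j < k → Measure.map (fun ω => g ω j k) μ = gaussianReal 0 1)

lemma EqN_nonneg (hN : 2 ≤ N) (c d : ℝ) : 0 ≤ ∫ ω, qN N 1 c d (g ω) ∂μ :=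
  integral_nonneg fun _ => qN_nonneg N hN c d _

lemma EqN_le (hN : 2 ≤ N) (c d : ℝ) : ∫ ω, qN N 1 c d (g ω) ∂μ ≤ 1 := by
  have := norm_integral_le_of_norm_le_const (μ := μ) (C := 1) (f := fun ω => qN N 1 c d (g ω))
    (Filter.Eventually.of_forall fun ω => by
      rw [Real.norm_eq_abs, abs_of_nonneg (qN_nonneg N hN c d _)]; exact qN_le N hN c d _)
  simp at this
  exact (le_abs_self _).trans this

lemma integrable_mag_sq
    (hmeas : ∀ (j k : Fin N), Measurable fun ω => g ω j k) (c d : ℝ) (j k : Fin N) :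
    Integrable (fun ω => mag N c d (g ω) (Sz N j * Sz N k) ^ 2) μ :=
  Integrable.of_bound ((mag_meas N g hmeas c d _).pow_const 2).aestronglyMeasurable 1
    (Filter.Eventually.of_forall fun ω => by
      rw [Real.norm_eq_abs, abs_of_nonneg (sq_nonneg _)]; exact mag_sq_le _ _ _ _ _ _)

lemma integrable_g_mag
    (hmeas : ∀ (j k : Fin N), Measurable fun ω => g ω j k)
    (hgauss : ∀ (j k : Fin N), j < k → Measure.map (fun ω => g ω j k) μ = gaussianReal 0 1)
    (c d : ℝ) (j k : Fin N) (hjk : j < k) :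
    Integrable (fun ω => g ω j k * mag N c d (g ω) (Sz N j * Sz N k)) μ := by
  have h1 : Integrable (fun x : ℝ => x) (Measure.map (fun ω => g ω j k) μ) := by
    rw [hgauss j k hjk]
    exact (memLp_id_gaussianReal (μ := 0) (v := 1) 1).integrable le_rfl
  have h2 : Integrable (fun ω => g ω j k) μ := h1.comp_measurable (hmeas j k)
  exact h2.mul_bdd (mag_meas N g hmeas c d _).aestronglyMeasurable
    (Filter.Eventually.of_forall fun ω => by
      rw [Real.norm_eq_abs]; exact abs_mag_le _ _ _ _ _ _)

lemma EqN_eq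
    (hmeas : ∀ (j k : Fin N), Measurable fun ω => g ω j k) (c d : ℝ) :
    ∫ ω, qN N 1 c d (g ω) ∂μ = (2 / ((N : ℝ) * ((N : ℝ) - 1))) * ∑ j : Fin N, ∑ k : Fin N,
      if j < k then ∫ ω, mag N c d (g ω) (Sz N j * Sz N k) ^ 2 ∂μ else 0 := by
  simp only [qN_eq]
  rw [integral_const_mul]
  congr 1
  have hi : ∀ j k : Fin N, Integrable (fun ω =>
      if j < k then mag N c d (g ω) (Sz N j * Sz N k) ^ 2 else 0) μ := by
    intro j k
    split_ifs
    · exact integrable_mag_sq μ N g hmeas c d j k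
    · exact integrable_zero _ _ _
  rw [integral_finsetSum _ fun j _ => integrable_finsetSum _ fun k _ => hi j k]
  refine Finset.sum_congr rfl fun j _ => ?_
  rw [integral_finsetSum _ fun k _ => hi j k]
  refine Finset.sum_congr rfl fun k _ => ?_
  split_ifs
  · rfl
  · simp

lemma integrable_mag_UN
    (hmeas : ∀ (j k : Fin N), Measurable fun ω => g ω j k)
    (hgauss : ∀ (j k : Fin N), j < k → Measure.map (fun ω => g ω j k) μ = gaussianReal 0 1)
    (c d : ℝ) :
    Integrable (fun ω => mag N c d (g ω) (-(UN N (g ω)))) μ ∧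
    ∫ ω, mag N c d (g ω) (-(UN N (g ω))) ∂μ = (1 / Real.sqrt N) * ∑ j : Fin N, ∑ k : Fin N,
      if j < k then ∫ ω, g ω j k * mag N c d (g ω) (Sz N j * Sz N k) ∂μ else 0 := by
  simp only [mag_UN]
  have hi : ∀ j k : Fin N, Integrable (fun ω =>
      if j < k then g ω j k * mag N c d (g ω) (Sz N j * Sz N k) else 0) μ := by
    intro j k
    split_ifs with hjk
    · exact integrable_g_mag μ N g hmeas hgauss c d j k hjk
    · exact integrable_zero _ _ _
  constructor
  · exact (integrable_finsetSum _ fun j _ => integrable_finsetSum _ fun k _ => hi j k).const_mul _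
  rw [integral_const_mul]
  congr 1
  rw [integral_finsetSum _ fun j _ => integrable_finsetSum _ fun k _ => hi j k]
  refine Finset.sum_congr rfl fun j _ => ?_
  rw [integral_finsetSum _ fun k _ => hi j k]
  refine Finset.sum_congr rfl fun k _ => ?_
  split_ifs
  · rfl
  · simp

/-- bounds for the mean interaction energy -/
lemma energy_bounds (hN : 2 ≤ N)
    (hmeas : ∀ (j k : Fin N), Measurable fun ω => g ω j k)
    (hgauss : ∀ (j k : Fin N), j < k → Measure.map (fun ω => g ω j k) μ = gaussianReal 0 1)
    (hindep : iIndepFun (fun (p : Prs N) ω => g ω p.1.1 p.1.2) μ)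
    (c d : ℝ) (hc : 0 ≤ c) :
    c * (((N : ℝ) - 1) / 2) * ((1 - 2 * d ^ 2) - ∫ ω, qN N 1 c d (g ω) ∂μ) ≤
      ∫ ω, mag N c d (g ω) (-(UN N (g ω))) ∂μ ∧
    ∫ ω, mag N c d (g ω) (-(UN N (g ω))) ∂μ ≤
      c * (((N : ℝ) - 1) / 2) * (1 - ∫ ω, qN N 1 c d (g ω) ∂μ) := by
  have hN' : (2 : ℝ) ≤ N := by exact_mod_cast hN
  have hN0 : (N : ℝ) ≠ 0 := by linarith
  have hN1 : (N : ℝ) - 1 ≠ 0 := by linarith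
  have hs : Real.sqrt N * Real.sqrt N = N := Real.mul_self_sqrt (by linarith)
  have hs0 : 0 < Real.sqrt N := Real.sqrt_pos.2 (by linarith)
  have e : ∀ κ : ℝ, c * (((N : ℝ) - 1) / 2) * (κ - ∫ ω, qN N 1 c d (g ω) ∂μ) =
      (1 / Real.sqrt N) * ∑ j : Fin N, ∑ k : Fin N,
      if j < k then c / Real.sqrt N *
        (κ - ∫ ω, mag N c d (g ω) (Sz N j * Sz N k) ^ 2 ∂μ) else 0 := by
    intro κ
    rw [EqN_eq μ N g hmeas]
    set S := ∑ j : Fin N, ∑ k : Fin N,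
      if j < k then ∫ ω, mag N c d (g ω) (Sz N j * Sz N k) ^ 2 ∂μ else 0 with hS
    have h1 : ∑ j : Fin N, ∑ k : Fin N, (if j < k then c / Real.sqrt N *
        (κ - ∫ ω, mag N c d (g ω) (Sz N j * Sz N k) ^ 2 ∂μ) else 0) =
        c / Real.sqrt N * (N * ((N : ℝ) - 1) / 2 * κ - S) := by
      rw [← pair_sum_const, hS]
      simp only [← Finset.sum_sub_distrib, Finset.mul_sum]
      refine Finset.sum_congr rfl fun j _ => Finset.sum_congr rfl fun k _ => ?_
      split_ifs
      · rfl
      · simp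
    rw [h1]
    have h2 : 1 / Real.sqrt N * (c / Real.sqrt N * (N * ((N : ℝ) - 1) / 2 * κ - S)) =
        c / (Real.sqrt N * Real.sqrt N) * (N * ((N : ℝ) - 1) / 2 * κ - S) := by
      field_simp
    rw [h2, hs]
    field_simp
  rw [(integrable_mag_UN μ N g hmeas hgauss c d).2, e, e]
  constructor
  · refine mul_le_mul_of_nonneg_left ?_ (by positivity)
    refine Finset.sum_le_sum fun j _ => Finset.sum_le_sum fun k _ => ?_
    split_ifs with hjk
    · exact (pair_ibp μ N g hmeas hgauss hindep c d hc j k hjk).1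
    · rfl
  · refine mul_le_mul_of_nonneg_left ?_ (by positivity)
    refine Finset.sum_le_sum fun j _ => Finset.sum_le_sum fun k _ => ?_
    split_ifs with hjk
    · exact (pair_ibp μ N g hmeas hgauss hindep c d hc j k hjk).2
    · rfl

lemma sqrt_bounds (d : ℝ) (hd : 0 < d) (hd' : d < 1 / 3) :
    Real.sqrt (2 * Real.log (Real.cosh d)) ≤ d ∧
    0.95 * d ≤ Real.sqrt (2 * Real.log (Real.cosh d)) := by
  have hcp := Real.cosh_pos d
  constructor
  · apply Real.sqrt_le_iff.2 ⟨hd.le, ?_⟩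
    have := (Real.log_le_iff_le_exp hcp).2 (Real.cosh_le_exp_half_sq d)
    linarith
  · apply Real.le_sqrt_of_sq_le
    have h1 : 1 + d ^ 2 / 2 ≤ Real.cosh d := by
      have := Real.cosh_two_mul (d / 2)
      have h2 := Real.cosh_sq (d / 2)
      have h3 := Real.self_le_sinh_iff.2 (by linarith : 0 ≤ d / 2)
      rw [mul_div_cancel₀ d two_ne_zero] at this
      nlinarith
    have h2 := Real.log_le_log (by positivity) h1
    have h3 := Real.one_sub_inv_le_log_of_pos (by positivity : 0 < 1 + d ^ 2 / 2)
    have h4 : 0.95 ^ 2 * d ^ 2 / 2 ≤ 1 - (1 + d ^ 2 / 2)⁻¹ := by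
      have h5 : 1 - (1 + d ^ 2 / 2)⁻¹ = (d ^ 2 / 2) / (1 + d ^ 2 / 2) := by field_simp; ring
      rw [h5, le_div_iff₀ (by positivity)]
      have h6 : d ^ 2 ≤ 1 / 9 := by nlinarith
      nlinarith [mul_nonneg (sq_nonneg d) (sub_nonneg.2 h6)]
    rw [mul_pow]
    linarith

/-- main finite-size comparison -/
lemma EqN_compare (hN : 12 ≤ N)
    (hmeas : ∀ (j k : Fin N), Measurable fun ω => g ω j k)
    (hgauss : ∀ (j k : Fin N), j < k → Measure.map (fun ω => g ω j k) μ = gaussianReal 0 1)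
    (hindep : iIndepFun (fun (p : Prs N) ω => g ω p.1.1 p.1.2) μ)
    (c d : ℝ) (hc : 1 ≤ c) (hd : 0 < d) (hd' : d < 1 / 3) :
    ∫ ω, qN N 1 (c + Real.sqrt (2 * Real.log (Real.cosh d))) 0 (g ω) ∂μ - 3 * d ≤
      ∫ ω, qN N 1 c d (g ω) ∂μ := by
  obtain ⟨ha1, ha2⟩ := sqrt_bounds d hd hd'
  set a := Real.sqrt (2 * Real.log (Real.cosh d)) with ha
  have ha0 : 0 < a := by linarith
  have hN2 : 2 ≤ N := by omega
  have hNr : (12 : ℝ) ≤ N := by exact_mod_cast hN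
  have h1 := (energy_bounds μ N g hN2 hmeas hgauss hindep c d (by linarith)).1
  have h2 := (energy_bounds μ N g hN2 hmeas hgauss hindep (c + a) 0 (by linarith)).2
  have hi1 := (integrable_mag_UN μ N g hmeas hgauss c d).1
  have hi2 := (integrable_mag_UN μ N g hmeas hgauss (c + a) 0).1
  have h3 := integral_mono (hi1.const_mul a) ((hi2.const_mul a).add (integrable_const
    ((N : ℝ) * (0.525 * d ^ 2)))) (fun ω => pathwise N c d a hd (g ω))
  simp only [Pi.add_apply] at h3
  rw [integral_add (hi2.const_mul a) (integrable_const _), integral_const_mul,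
    integral_const_mul] at h3
  simp only [integral_const, probReal_univ, one_smul] at h3
  have q1 := EqN_le μ N g hN2 (c + a) 0
  have q0 := EqN_nonneg μ N g hN2 (c + a) 0
  generalize (∫ ω, qN N 1 (c + a) 0 (g ω) ∂μ) = Q' at *
  generalize (∫ ω, qN N 1 c d (g ω) ∂μ) = Q at *
  generalize (∫ ω, mag N c d (g ω) (-(UN N (g ω))) ∂μ) = E1 at *
  generalize (∫ ω, mag N (c + a) 0 (g ω) (-(UN N (g ω))) ∂μ) = E2 at *
  clear_value a
  set M : ℝ := ((N : ℝ) - 1) / 2 with hM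
  have hM0 : 0 < M := by rw [hM]; linarith
  have hNM : (N : ℝ) ≤ 24 / 11 * M := by rw [hM]; linarith
  have h4 : E1 ≤ E2 + 24 / 11 * M * (0.525 * d / 0.95) := by
    have h5 : (N : ℝ) * (0.525 * d ^ 2) ≤ a * (24 / 11 * M * (0.525 * d / 0.95)) := by
      calc (N : ℝ) * (0.525 * d ^ 2) ≤ 24 / 11 * M * (0.525 * d ^ 2) := by gcongr
        _ = (0.95 * d) * (24 / 11 * M * (0.525 * d / 0.95)) := by ring
        _ ≤ _ := by gcongr
    have : a * E1 ≤ a * (E2 + 24 / 11 * M * (0.525 * d / 0.95)) := by linarith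
    exact le_of_mul_le_mul_left this ha0
  have h6 : M * (c * ((1 - 2 * d ^ 2) - Q)) ≤
      M * ((c + a) * (1 - Q') + 24 / 11 * (0.525 * d / 0.95)) := by linarith
  have h7 := le_of_mul_le_mul_left h6 hM0
  have h8 : a * (1 - Q') ≤ d := by nlinarith
  have h9 : c * (Q' - 2 * d ^ 2 - Q) ≤ d + 24 / 11 * (0.525 * d / 0.95) := by linarith
  by_contra hcon
  push Not at hcon
  have h10 : d + 24 / 11 * (0.525 * d / 0.95) < Q' - 2 * d ^ 2 - Q := by
    have h12 : d ^ 2 ≤ d / 3 := by nlinarith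
    have h13 : 24 / 11 * (0.525 * d / 0.95) ≤ 1.21 * d := by
      have h14 : 24 / 11 * (0.525 * d / 0.95) = (24 / 11 * (0.525 / 0.95)) * d := by ring
      rw [h14]
      exact mul_le_mul_of_nonneg_right (by norm_num) hd.le
    linarith
  have h11 : 0 < Q' - 2 * d ^ 2 - Q := by
    have : 0 < d + 24 / 11 * (0.525 * d / 0.95) := by positivity
    linarith
  nlinarith

end Fixed

lemma qbar_mono {Ω : Type*} [MeasurableSpace Ω] (μ : Measure Ω) [IsProbabilityMeasure μ]
    (g : (N : ℕ) → Ω → Fin N → Fin N → ℝ) (c d c' d' e : ℝ)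
    (h : ∀ N, 12 ≤ N → ∫ ω, qN N 1 c' d' (g N ω) ∂μ - e ≤ ∫ ω, qN N 1 c d (g N ω) ∂μ) :
    qbar μ g c' d' - e ≤ qbar μ g c d := by
  have bd : ∀ c d : ℝ, Filter.IsBoundedUnder (· ≥ ·) Filter.atTop
      (fun N : ℕ => ∫ ω, qN N 1 c d (g N ω) ∂μ) := fun c d =>
    Filter.isBoundedUnder_of_eventually_ge (a := 0)
      ((Filter.eventually_ge_atTop 2).mono fun N hN => EqN_nonneg μ N (g N) hN c d)
  have cb : ∀ c d : ℝ, Filter.IsCoboundedUnder (· ≥ ·) Filter.atTop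
      (fun N : ℕ => ∫ ω, qN N 1 c d (g N ω) ∂μ) := fun c d =>
    (Filter.isBoundedUnder_of_eventually_le (a := 1)
      ((Filter.eventually_ge_atTop 2).mono fun N hN =>
        EqN_le μ N (g N) hN c d)).isCoboundedUnder_ge
  refine le_of_forall_lt fun x hx => ?_
  have hx' : x + e < qbar μ g c' d' := by linarith
  obtain ⟨y, hy1, hy2⟩ := exists_between hx'
  have := Filter.eventually_lt_of_lt_liminf hy2 (bd c' d')
  refine lt_of_lt_of_le (b := y - e) (by linarith) ?_
  refine Filter.le_liminf_of_le (cb c d) ?_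
  filter_upwards [this, Filter.eventually_ge_atTop 12] with N h1 h2
  linarith [h N h2]

end Disorder

theorem stmt15
    {Ω : Type*} [MeasurableSpace Ω] (μ : Measure Ω) [IsProbabilityMeasure μ]
    (β J b : ℝ) (hβ : 0 < β) (hJ : 0 < J) (hb : 0 ≤ b) (hβJ : 1 ≤ β * J)
    (g : (N : ℕ) → Ω → Fin N → Fin N → ℝ)
    (hmeas : ∀ (N : ℕ) (j k : Fin N), Measurable fun ω => g N ω j k)
    (hgauss : ∀ (N : ℕ) (j k : Fin N), j < k →
      Measure.map (fun ω => g N ω j k) μ = gaussianReal 0 1)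
    (hindep : ∀ N : ℕ, iIndepFun
      (fun (p : {q : Fin N × Fin N // q.1 < q.2}) ω => g N ω p.1.1 p.1.2) μ) :
    qbar μ g (β * J) (β * b)
      ≥ qbar μ g (β * J + Real.sqrt (2 * Real.log (Real.cosh (β * b)))) 0
          - 3 * (β * b) := by
  refine ge_iff_le.2 (qbar_mono μ g _ _ _ _ _ fun N hN => ?_)
  set c := β * J with hc
  set d := β * b with hd
  have hd0 : 0 ≤ d := mul_nonneg hβ.le hb
  rcases hd0.eq_or_lt with h0 | h0
  · rw [← h0]; simp
  · by_cases h1 : d < 1 / 3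
    · exact EqN_compare μ N (g N) hN (hmeas N) (hgauss N) (hindep N) c d hβJ h0 h1
    · have q1 := EqN_le μ N (g N) (by omega)
        (c + Real.sqrt (2 * Real.log (Real.cosh d))) 0
      have q0 := EqN_nonneg μ N (g N) (by omega) c d
      linarith
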